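/- arXiv:1802.09915 — 3 statements merged into one kernel-verified Lean document; each statement's English description precedes it below -/
import Mathlib

section
/- Let δ ∈ (0,1), C₂ > 0 and fix C₁ > C₂/(1−δ). Then there exists R₁ > 0 such that for every R > R₁ and ℓ > 0 the following two comparison statements hold for continuously differentiable functions on [0,ℓ]: (i) if λ : [0,ℓ] → ℝ satisfies λ'(r) + λ(r)² ≤ C₂/(R+r)^{2+δ} for all r and λ(0) ≤ 1/R + C₂/R^{1+δ}, then λ(r) ≤ 1/(R+r) + C₁/(R+r)^{1+δ} for all r ∈ [0,ℓ]; (ii) if μ : [0,ℓ] → ℝ satisfies μ'(r) + μ(r)² ≥ −C₂/(R+r)^{2+δ} for all r and μ(0) ≥ 1/R − C₂/R^{1+δ}, then μ(r) ≥ 1/(R+r) − C₁/(R+r)^{1+δ} for all r ∈ [0,ℓ]. -/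
lemma aux_deriv (δ c R r : ℝ) (h : 0 < R + r) :
    HasDerivAt (fun r : ℝ => 1 / (R + r) + c / (R + r) ^ ((1:ℝ) + δ))
      (-1 / (R + r) ^ 2 - c * (1 + δ) / ((R + r) ^ 2 * (R + r) ^ δ)) r := by
  have h0 : HasDerivAt (fun r : ℝ => R + r) 1 r := (hasDerivAt_id r).const_add R
  have h1 := h0.rpow_const (p := (1:ℝ) + δ) (Or.inl h.ne')
  have hP : 0 < (R + r) ^ δ := Real.rpow_pos_of_pos h δ
  have hpos : 0 < (R + r) ^ ((1:ℝ) + δ) := Real.rpow_pos_of_pos h _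
  have h2 := ((hasDerivAt_const r (1:ℝ)).div h0 h.ne').add
    ((hasDerivAt_const r c).div h1 hpos.ne')
  refine h2.congr_deriv ?_
  have e1 : (R + r) ^ ((1:ℝ) + δ) = (R + r) * (R + r) ^ δ := by
    rw [Real.rpow_add h, Real.rpow_one]
  have e2 : (R + r) ^ ((1:ℝ) + δ - 1) = (R + r) ^ δ := by congr 1; ring
  rw [e1, e2]
  field_simp
  ring

/-- Riccati comparison (Lemma 4.3): for `δ ∈ (0,1)`, `C₂ > 0` and `C₁ > C₂/(1-δ)`,
there is `R₁ > 0` such that for all `R > R₁` and `ℓ > 0`, solutions of the Riccati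
differential inequalities on `[0,ℓ]` are bounded by the comparison functions
`f±(r) = 1/(R+r) ± C₁/(R+r)^{1+δ}`. -/
theorem stmt_1 (δ C₁ C₂ : ℝ) (hδ : δ ∈ Set.Ioo (0:ℝ) 1) (hC₂ : 0 < C₂)
    (hC₁ : C₂ / (1 - δ) < C₁) :
    ∃ R₁ > (0:ℝ), ∀ R > R₁, ∀ ℓ > (0:ℝ),
      (∀ lam lam' : ℝ → ℝ,
        (∀ r ∈ Set.Icc (0:ℝ) ℓ, HasDerivAt lam (lam' r) r) →
        (∀ r ∈ Set.Icc (0:ℝ) ℓ, lam' r + (lam r)^2 ≤ C₂ / (R + r) ^ ((2:ℝ) + δ)) →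
        lam 0 ≤ 1 / R + C₂ / R ^ ((1:ℝ) + δ) →
        ∀ r ∈ Set.Icc (0:ℝ) ℓ, lam r ≤ 1 / (R + r) + C₁ / (R + r) ^ ((1:ℝ) + δ)) ∧
      (∀ mu mu' : ℝ → ℝ,
        (∀ r ∈ Set.Icc (0:ℝ) ℓ, HasDerivAt mu (mu' r) r) →
        (∀ r ∈ Set.Icc (0:ℝ) ℓ, -(C₂ / (R + r) ^ ((2:ℝ) + δ)) ≤ mu' r + (mu r)^2) →
        1 / R - C₂ / R ^ ((1:ℝ) + δ) ≤ mu 0 →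
        ∀ r ∈ Set.Icc (0:ℝ) ℓ, 1 / (R + r) - C₁ / (R + r) ^ ((1:ℝ) + δ) ≤ mu r) := by
  obtain ⟨hδ0, hδ1⟩ := hδ
  have hd : 0 < 1 - δ := by linarith
  have hgap : C₂ < C₁ * (1 - δ) := (div_lt_iff₀ hd).1 hC₁
  have hC1 : C₂ < C₁ := by
    have : 0 < C₁ := (div_pos hC₂ hd).trans hC₁
    nlinarith
  have hC1p : 0 < C₁ := hC₂.trans hC1
  obtain ⟨A, hA⟩ := Filter.eventually_atTop.1
    ((tendsto_rpow_atTop hδ0).eventually_gt_atTop (C₁ ^ 2 / (C₁ * (1 - δ) - C₂)))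
  refine ⟨max A 1, by positivity, fun R hR ℓ hℓ => ?_⟩
  have hRA : A < R := (le_max_left _ _).trans_lt hR
  have hR0 : 0 < R := zero_lt_one.trans ((le_max_right _ _).trans_lt hR)
  have e1 : ∀ s : ℝ, 0 < s → s ^ ((1:ℝ) + δ) = s * s ^ δ := fun s h => by
    rw [Real.rpow_add h, Real.rpow_one]
  have e2 : ∀ s : ℝ, 0 < s → s ^ ((2:ℝ) + δ) = s ^ 2 * s ^ δ := fun s h => by
    rw [Real.rpow_add h, Real.rpow_two]
  have hRd : 0 < R ^ ((1:ℝ) + δ) := Real.rpow_pos_of_pos hR0 _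
  have hini : C₂ / R ^ ((1:ℝ) + δ) ≤ C₁ / R ^ ((1:ℝ) + δ) := by gcongr
  constructor
  · intro f f' hf hineq h0
    refine image_le_of_deriv_right_lt_deriv_boundary'
      (fun x hx => (hf x hx).continuousAt.continuousWithinAt)
      (fun x hx => (hf x (Set.Ico_subset_Icc_self hx)).hasDerivWithinAt)
      (by simp only [add_zero]; linarith)
      (fun x hx => (aux_deriv δ C₁ R x (by linarith [hx.1])).continuousAt.continuousWithinAt)
      (fun x hx => (aux_deriv δ C₁ R x (by linarith [hx.1])).hasDerivWithinAt) ?_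
    intro x hx he
    have hs : 0 < R + x := by linarith [hx.1]
    have h := hineq x (Set.Ico_subset_Icc_self hx)
    rw [he, e1 _ hs, e2 _ hs] at h
    have hP : 0 < (R + x) ^ δ := Real.rpow_pos_of_pos hs δ
    generalize (R + x) ^ δ = P at *
    generalize R + x = s at *
    have key : (-1 / s ^ 2 - C₁ * (1 + δ) / (s ^ 2 * P)) + (1 / s + C₁ / (s * P)) ^ 2
        - C₂ / (s ^ 2 * P) = (C₁ * (1 - δ) - C₂ + C₁ ^ 2 / P) / (s ^ 2 * P) := by
      field_simp
      ring
    have : 0 < (C₁ * (1 - δ) - C₂ + C₁ ^ 2 / P) / (s ^ 2 * P) := by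
      have : 0 < C₁ ^ 2 / P := by positivity
      apply div_pos <;> [linarith; positivity]
    linarith
  · intro f f' hf hineq h0 x hx
    have main := image_le_of_deriv_right_lt_deriv_boundary'
      (f := fun x => - f x) (f' := fun x => - f' x) (a := 0) (b := ℓ)
      (B := fun r : ℝ => - (1 / (R + r) + (-C₁) / (R + r) ^ ((1:ℝ) + δ)))
      (fun x hx => (hf x hx).neg.continuousAt.continuousWithinAt)
      (fun x hx => (hf x (Set.Ico_subset_Icc_self hx)).neg.hasDerivWithinAt)
      (by simp only [add_zero, neg_div]; linarith)
      (fun x hx => (aux_deriv δ (-C₁) R x (by linarith [hx.1])).neg.continuousAt.continuousWithinAt)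
      (fun x hx => (aux_deriv δ (-C₁) R x (by linarith [hx.1])).neg.hasDerivWithinAt) ?_ hx
    · simp only [neg_div] at main
      linarith
    intro x hx he
    have hs : 0 < R + x := by linarith [hx.1]
    have h := hineq x (Set.Ico_subset_Icc_self hx)
    have hPA := hA (R + x) (by linarith [hx.1])
    have he' := neg_injective he
    rw [he', e1 _ hs, e2 _ hs] at h
    have hP : 0 < (R + x) ^ δ := Real.rpow_pos_of_pos hs δ
    clear he he' hineq hf h0 hA hini hRd e1 e2
    show - f' x < -(-1 / (R + x) ^ 2 - (-C₁) * (1 + δ) / ((R + x) ^ 2 * (R + x) ^ δ))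
    generalize (R + x) ^ δ = P at *
    generalize R + x = s at *
    have key : (-1 / s ^ 2 - (-C₁) * (1 + δ) / (s ^ 2 * P)) + (1 / s + (-C₁) / (s * P)) ^ 2
        + C₂ / (s ^ 2 * P) = -((C₁ * (1 - δ) - C₂ - C₁ ^ 2 / P) / (s ^ 2 * P)) := by
      field_simp
      ring
    have : 0 < (C₁ * (1 - δ) - C₂ - C₁ ^ 2 / P) / (s ^ 2 * P) := by
      have h1 : 0 < C₁ * (1 - δ) - C₂ := by linarith
      have : C₁ ^ 2 / P < C₁ * (1 - δ) - C₂ := by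
        rw [div_lt_iff₀ h1] at hPA
        rw [div_lt_iff₀ hP]
        linarith
      apply div_pos <;> [linarith; positivity]
    linarith
end

section
/- Let a ∈ ℝ with a ≠ 0, and let W : ℝ³ → ℝ³ be a smooth vector field satisfying curl W = a·W on all of ℝ³, i.e. ∂₂W₃ − ∂₃W₂ = aW₁, ∂₃W₁ − ∂₁W₃ = aW₂, ∂₁W₂ − ∂₂W₁ = aW₃. If ∫_{|x| ≥ R} |W(x)|² dx < ∞ for some R ≥ 0, then W ≡ 0 on ℝ³. -/
open MeasureTheory

/-- Euclidean partial derivative of a scalar function on `ℝ³` in the `i`-th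
coordinate direction. -/
noncomputable def pd (i : Fin 3) (f : EuclideanSpace ℝ (Fin 3) → ℝ)
    (x : EuclideanSpace ℝ (Fin 3)) : ℝ :=
  fderiv ℝ f x (EuclideanSpace.single i 1)

abbrev E3 := EuclideanSpace ℝ (Fin 3)

lemma pd_comm (f : E3 → ℝ) (hf : ContDiff ℝ (⊤ : ℕ∞) f) (i j : Fin 3) (x : E3) :
    pd i (pd j f) x = pd j (pd i f) x := by
  have hd : Differentiable ℝ (fderiv ℝ f) :=
    (hf.fderiv_right (m := 1) (by norm_cast)).differentiable (by norm_num)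
  have key : ∀ k l : Fin 3, pd k (pd l f) x =
      fderiv ℝ (fderiv ℝ f) x (EuclideanSpace.single k 1) (EuclideanSpace.single l 1) := by
    intro k l
    have h := ((hd x).hasFDerivAt.clm_apply
      (hasFDerivAt_const (EuclideanSpace.single l (1:ℝ) : E3) x)).fderiv
    unfold pd at *
    rw [h]; simp
  rw [key, key]
  have hs : IsSymmSndFDerivAt ℝ f x := by
    apply ContDiffAt.isSymmSndFDerivAt hf.contDiffAt
    simp
    norm_cast
  exact hs.eq _ _

lemma pd_contDiff (f : E3 → ℝ) (hf : ContDiff ℝ (⊤ : ℕ∞) f) (i : Fin 3) :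
    ContDiff ℝ (⊤ : ℕ∞) (pd i f) := by
  have : ContDiff ℝ (⊤ : ℕ∞) (fderiv ℝ f) := hf.fderiv_right (by norm_cast)
  exact this.clm_apply contDiff_const

lemma pd_lin (f g : E3 → ℝ) (c : ℝ) (hf : Differentiable ℝ f) (hg : Differentiable ℝ g) (i : Fin 3)
    (x : E3) : pd i (fun y => c * (f y - g y)) x = c * (pd i f x - pd i g x) := by
  have h : HasFDerivAt (fun y => c * (f y - g y)) (c • (fderiv ℝ f x - fderiv ℝ g x)) x :=
    (((hf x).hasFDerivAt).sub (hg x).hasFDerivAt).const_mul c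
  unfold pd
  rw [h.fderiv]
  simp

lemma div_zero' (a : ℝ) (ha : a ≠ 0) (u v w : E3 → ℝ)
    (hu : ContDiff ℝ (⊤ : ℕ∞) u) (hv : ContDiff ℝ (⊤ : ℕ∞) v) (hw : ContDiff ℝ (⊤ : ℕ∞) w)
    (h : ∀ x, pd 1 w x - pd 2 v x = a * u x ∧ pd 2 u x - pd 0 w x = a * v x ∧
      pd 0 v x - pd 1 u x = a * w x) (x : E3) : pd 0 u x + pd 1 v x + pd 2 w x = 0 := by
  have e1 : u = fun y => a⁻¹ * (pd 1 w y - pd 2 v y) := by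
    ext y; rw [(h y).1]; field_simp
  have e2 : v = fun y => a⁻¹ * (pd 2 u y - pd 0 w y) := by
    ext y; rw [(h y).2.1]; field_simp
  have e3 : w = fun y => a⁻¹ * (pd 0 v y - pd 1 u y) := by
    ext y; rw [(h y).2.2]; field_simp
  have d : ∀ f, ContDiff ℝ (⊤ : ℕ∞) f → ∀ i, Differentiable ℝ (pd i f) := fun f hf i =>
    (pd_contDiff f hf i).differentiable (by simp)
  have h1 := congrArg (fun f => pd 0 f x) e1
  have h2 := congrArg (fun f => pd 1 f x) e2
  have h3 := congrArg (fun f => pd 2 f x) e3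
  rw [pd_lin _ _ _ (d _ hw _) (d _ hv _)] at h1
  rw [pd_lin _ _ _ (d _ hu _) (d _ hw _)] at h2
  rw [pd_lin _ _ _ (d _ hv _) (d _ hu _)] at h3
  rw [h1, h2, h3, pd_comm w hw 0 1, pd_comm v hv 0 2, pd_comm u hu 1 2]
  ring

/-- the Pohozaev field -/
noncomputable def PF (W : Fin 3 → E3 → ℝ) (i : Fin 3) (x : E3) : ℝ :=
  W i x * (x 0 * W 0 x + x 1 * W 1 x + x 2 * W 2 x)
    - (1/2) * (x i * (W 0 x * W 0 x + W 1 x * W 1 x + W 2 x * W 2 x))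

lemma hasF_coord (i : Fin 3) (x : E3) :
    HasFDerivAt (fun y : E3 => y i) (EuclideanSpace.proj i : E3 →L[ℝ] ℝ) x :=
  (EuclideanSpace.proj i : E3 →L[ℝ] ℝ).hasFDerivAt

lemma pd_PF (W : Fin 3 → E3 → ℝ) (hW : ∀ i, Differentiable ℝ (W i)) (i : Fin 3) (x : E3) :
    pd i (PF W i) x = pd i (W i) x * (x 0 * W 0 x + x 1 * W 1 x + x 2 * W 2 x)
      + W i x * (W i x + (x 0 * pd i (W 0) x + x 1 * pd i (W 1) x + x 2 * pd i (W 2) x))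
      - (1/2) * ((W 0 x * W 0 x + W 1 x * W 1 x + W 2 x * W 2 x)
        + x i * (2 * (W 0 x * pd i (W 0) x + W 1 x * pd i (W 1) x + W 2 x * pd i (W 2) x))) := by
  have h := fun j => (hW j x).hasFDerivAt
  have hp := ((h i).mul ((((hasF_coord 0 x).mul (h 0)).add ((hasF_coord 1 x).mul (h 1))).add
    ((hasF_coord 2 x).mul (h 2)))).sub
    (((hasF_coord i x).mul ((((h 0).mul (h 0)).add ((h 1).mul (h 1))).add
    ((h 2).mul (h 2)))).const_mul (1/2))
  have e := congrArg (fun L => L (EuclideanSpace.single i 1)) hp.fderiv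
  have e' : pd i (PF W i) x = _ := e
  rw [e']
  fin_cases i <;> simp [pd] <;> ring

lemma div_PF (a : ℝ) (W : Fin 3 → E3 → ℝ) (hW : ∀ i, Differentiable ℝ (W i))
    (x : E3) (h : pd 1 (W 2) x - pd 2 (W 1) x = a * W 0 x ∧ pd 2 (W 0) x - pd 0 (W 2) x = a * W 1 x ∧
      pd 0 (W 1) x - pd 1 (W 0) x = a * W 2 x) (hdiv : pd 0 (W 0) x + pd 1 (W 1) x + pd 2 (W 2) x = 0) :
    pd 0 (PF W 0) x + pd 1 (PF W 1) x + pd 2 (PF W 2) x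
      = -(1/2) * (W 0 x * W 0 x + W 1 x * W 1 x + W 2 x * W 2 x) := by
  obtain ⟨h0, h1, h2⟩ := h
  rw [pd_PF W hW, pd_PF W hW, pd_PF W hW]
  have a0 : pd 1 (W 2) x = a * W 0 x + pd 2 (W 1) x := by linarith
  have a1 : pd 2 (W 0) x = a * W 1 x + pd 0 (W 2) x := by linarith
  have a2 : pd 0 (W 1) x = a * W 2 x + pd 1 (W 0) x := by linarith
  have a3 : pd 0 (W 0) x = -(pd 1 (W 1) x + pd 2 (W 2) x) := by linarith
  rw [a0, a1, a2, a3]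
  ring

lemma PF_contDiff (W : Fin 3 → E3 → ℝ) (hW : ∀ i, ContDiff ℝ (⊤ : ℕ∞) (W i)) (i : Fin 3) :
    ContDiff ℝ (⊤ : ℕ∞) (PF W i) := by
  have hc : ∀ j : Fin 3, ContDiff ℝ (⊤ : ℕ∞) (fun y : E3 => y j) := fun j =>
    (EuclideanSpace.proj j : E3 →L[ℝ] ℝ).contDiff
  have := hc 0; have := hc 1; have := hc 2; have := hc i
  have := hW 0; have := hW 1; have := hW 2; have := hW i
  unfold PF
  fun_prop

lemma parts (χ P : E3 → ℝ) (hχ : ContDiff ℝ (⊤ : ℕ∞) χ) (hc : HasCompactSupport χ)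
    (hP : ContDiff ℝ (⊤ : ℕ∞) P) (i : Fin 3) :
    Integrable (fun x => χ x * pd i P x) ∧ Integrable (fun x => pd i χ x * P x) ∧
    ∫ x, χ x * pd i P x = - ∫ x, pd i χ x * P x := by
  have hcd : HasCompactSupport (pd i χ) := hc.fderiv_apply ℝ _
  have i1 : Integrable (fun x => χ x * pd i P x) :=
    (hχ.continuous.mul (pd_contDiff P hP i).continuous).integrable_of_hasCompactSupport hc.mul_right
  have i2 : Integrable (fun x => pd i χ x * P x) :=
    ((pd_contDiff χ hχ i).continuous.mul hP.continuous).integrable_of_hasCompactSupport hcd.mul_right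
  refine ⟨i1, i2, ?_⟩
  have i3 : Integrable (fun x => χ x * P x) :=
    (hχ.continuous.mul hP.continuous).integrable_of_hasCompactSupport hc.mul_right
  exact integral_mul_fderiv_eq_neg_fderiv_mul_of_integrable i2 i1 i3
    (fun x _ => hχ.differentiable (by simp) x) (fun x _ => hP.differentiable (by simp) x)

lemma PF_bound (W : Fin 3 → E3 → ℝ) (i : Fin 3) (x : E3) :
    |PF W i x| ≤ 4 * (‖x‖ * (W 0 x * W 0 x + W 1 x * W 1 x + W 2 x * W 2 x)) := by
  have hx : ∀ j, |x j| ≤ ‖x‖ := fun j => by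
    simpa using PiLp.norm_apply_le x j
  set S := W 0 x * W 0 x + W 1 x * W 1 x + W 2 x * W 2 x with hS
  have hS0 : 0 ≤ S := by
    linarith [mul_self_nonneg (W 0 x), mul_self_nonneg (W 1 x), mul_self_nonneg (W 2 x)]
  have hs : ∀ j, W j x * W j x ≤ S := by
    intro j
    have := mul_self_nonneg (W 0 x); have := mul_self_nonneg (W 1 x)
    have := mul_self_nonneg (W 2 x)
    fin_cases j <;> simp <;> linarith
  have hw : ∀ j, |W i x * W j x| ≤ S := fun j => by
    rw [abs_le]
    have := hs i; have := hs j
    constructor <;> nlinarith [sq_nonneg (W i x + W j x), sq_nonneg (W i x - W j x)]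
  have ht : ∀ j, |x j * (W i x * W j x)| ≤ ‖x‖ * S := fun j => by
    rw [abs_mul]; exact mul_le_mul (hx j) (hw j) (abs_nonneg _) (norm_nonneg _)
  have h4 : |x i * S| ≤ ‖x‖ * S := by
    rw [abs_mul, abs_of_nonneg hS0]; exact mul_le_mul_of_nonneg_right (hx i) hS0
  have e : PF W i x = x 0 * (W i x * W 0 x) + x 1 * (W i x * W 1 x) + x 2 * (W i x * W 2 x)
      - (1/2) * (x i * S) := by unfold PF; rw [hS]; ring
  have h0 := abs_le.1 (ht 0); have h1 := abs_le.1 (ht 1); have h2 := abs_le.1 (ht 2)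
  have h5 := abs_le.1 h4
  rw [e, abs_le]
  constructor <;> linarith

lemma int_add3 (f g h : E3 → ℝ) (hf : Integrable f) (hg : Integrable g) (hh : Integrable h) :
    ∫ x, (f x + g x + h x) = (∫ x, f x) + (∫ x, g x) + ∫ x, h x := by
  have hfg : Integrable (fun x => f x + g x) := hf.add hg
  rw [integral_add hfg hh, integral_add hf hg]

lemma main_int (a : ℝ) (W : Fin 3 → E3 → ℝ) (hW : ∀ i, ContDiff ℝ (⊤ : ℕ∞) (W i))
    (h : ∀ x, pd 1 (W 2) x - pd 2 (W 1) x = a * W 0 x ∧ pd 2 (W 0) x - pd 0 (W 2) x = a * W 1 x ∧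
      pd 0 (W 1) x - pd 1 (W 0) x = a * W 2 x)
    (hdiv : ∀ x, pd 0 (W 0) x + pd 1 (W 1) x + pd 2 (W 2) x = 0)
    (hI : Integrable (fun x => W 0 x * W 0 x + W 1 x * W 1 x + W 2 x * W 2 x)) :
    ∫ x, (W 0 x * W 0 x + W 1 x * W 1 x + W 2 x * W 2 x) = 0 := by
  set S : E3 → ℝ := fun x => W 0 x * W 0 x + W 1 x * W 1 x + W 2 x * W 2 x with hS
  have hS0 : ∀ x, 0 ≤ S x := fun x => by simp only [hS]; linarith [mul_self_nonneg (W 0 x), mul_self_nonneg (W 1 x), mul_self_nonneg (W 2 x)]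
  have hSc : Continuous S := by
    have := (hW 0).continuous; have := (hW 1).continuous; have := (hW 2).continuous
    simp only [hS]; fun_prop
  let b : ContDiffBump (0 : E3) := ⟨1, 2, by norm_num, by norm_num⟩
  let f : E3 → ℝ := b
  have hf : ContDiff ℝ (⊤ : ℕ∞) f := b.contDiff
  have hfc : HasCompactSupport f := b.hasCompactSupport
  have hf0 : f 0 = 1 := b.one_of_mem_closedBall (by simp [b])
  have hf1 : ∀ x, |f x| ≤ 1 := fun x => by
    rw [abs_of_nonneg b.nonneg]; exact b.le_one
  let G : E3 → ℝ := fun y => (|pd 0 f y| + |pd 1 f y| + |pd 2 f y|) * ‖y‖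
  have hpc : ∀ i, Continuous (pd i f) := fun i => (pd_contDiff f hf i).continuous
  have hGc : Continuous G := by
    have := hpc 0; have := hpc 1; have := hpc 2
    simp only [G]; fun_prop
  have hps : ∀ i, HasCompactSupport (fun y => |pd i f y|) := fun i =>
    (hfc.fderiv_apply ℝ (EuclideanSpace.single i (1:ℝ) : E3)).norm
  have hGs : HasCompactSupport G := (((hps 0).add (hps 1)).add (hps 2)).mul_right
  obtain ⟨C, hC⟩ := hGs.exists_bound_of_continuous hGc
  have hG0 : G 0 = 0 := by simp [G]
  let t : ℕ → ℝ := fun n => 1 / ((n : ℝ) + 1)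
  have htpos : ∀ n, 0 < t n := fun n => by simp only [t]; positivity
  have htl : Filter.Tendsto t Filter.atTop (nhds 0) := tendsto_one_div_add_atTop_nhds_zero_nat
  have htx : ∀ x : E3, Filter.Tendsto (fun n => t n • x) Filter.atTop (nhds 0) := fun x => by
    simpa using htl.smul_const x
  let χ : ℕ → E3 → ℝ := fun n x => f (t n • x)
  have hχ : ∀ n, ContDiff ℝ (⊤ : ℕ∞) (χ n) := fun n =>
    hf.comp (contDiff_const_smul (t n))
  have hχc : ∀ n, HasCompactSupport (χ n) := fun n => hfc.comp_smul (htpos n).ne'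
  have hχd : ∀ n i x, pd i (χ n) x = t n * pd i f (t n • x) := fun n i x => by
    have h1 : HasFDerivAt (fun y : E3 => t n • y) (t n • ContinuousLinearMap.id ℝ E3) x :=
      (hasFDerivAt_id x).const_smul (t n)
    have h2 : HasFDerivAt f (fderiv ℝ f (t n • x)) (t n • x) :=
      (hf.differentiable (by simp) _).hasFDerivAt
    have h3 := (h2.comp x h1).fderiv
    have h4 : pd i (χ n) x = _ := congrArg (fun L => L (EuclideanSpace.single i 1)) h3
    rw [h4]; simp [pd]
  let F : ℕ → E3 → ℝ := fun n x =>
    pd 0 (χ n) x * PF W 0 x + pd 1 (χ n) x * PF W 1 x + pd 2 (χ n) x * PF W 2 x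
  have hFb : ∀ n x, |F n x| ≤ G (t n • x) * (4 * S x) := fun n x => by
    have hi : ∀ i, |pd i (χ n) x * PF W i x| ≤ |pd i f (t n • x)| * ‖t n • x‖ * (4 * S x) := by
      intro i
      rw [hχd, abs_mul, abs_mul, abs_of_pos (htpos n), norm_smul, Real.norm_eq_abs,
        abs_of_pos (htpos n)]
      have := mul_le_mul_of_nonneg_left (PF_bound W i x)
        (mul_nonneg (htpos n).le (abs_nonneg (pd i f (t n • x))))
      refine this.trans (le_of_eq ?_)
      simp only [hS]; ring
    refine (abs_add_three _ _ _).trans ?_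
    simp only [G]
    have := hi 0; have := hi 1; have := hi 2
    linarith
  have hFc : ∀ n, Continuous (F n) := fun n => by
    have h1 := fun i => (PF_contDiff W hW i).continuous
    have h2 := fun i => (pd_contDiff _ (hχ n) i).continuous
    have := h1 0; have := h1 1; have := h1 2
    have := h2 0; have := h2 1; have := h2 2
    simp only [F]; fun_prop
  have L1 : Filter.Tendsto (fun n => ∫ x, F n x) Filter.atTop (nhds (∫ x : E3, (0:ℝ))) := by
    refine tendsto_integral_of_dominated_convergence (fun x => C * (4 * S x))
      (fun n => (hFc n).aestronglyMeasurable) ((hI.const_mul 4).const_mul C) ?_ ?_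
    · intro n
      refine Filter.Eventually.of_forall fun x => ?_
      rw [Real.norm_eq_abs]
      refine (hFb n x).trans ?_
      exact mul_le_mul_of_nonneg_right ((le_abs_self _).trans (hC _)) (by linarith [hS0 x])
    · refine Filter.Eventually.of_forall fun x => ?_
      apply squeeze_zero_norm (fun n => hFb n x)
      have := ((hGc.tendsto 0).comp (htx x)).mul_const (4 * S x)
      simpa [hG0] using this
  have L2 : Filter.Tendsto (fun n => ∫ x, χ n x * S x) Filter.atTop (nhds (∫ x, S x)) := by
    refine tendsto_integral_of_dominated_convergence S
      (fun n => ((hχ n).continuous.mul hSc).aestronglyMeasurable) hI ?_ ?_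
    · intro n
      refine Filter.Eventually.of_forall fun x => ?_
      rw [Real.norm_eq_abs, abs_mul, abs_of_nonneg (hS0 x)]
      exact mul_le_of_le_one_left (hS0 x) (hf1 _)
    · refine Filter.Eventually.of_forall fun x => ?_
      have := ((hf.continuous.tendsto 0).comp (htx x)).mul_const (S x)
      simpa [hf0] using this
  have key : ∀ n, ∫ x, χ n x * S x = 2 * ∫ x, F n x := fun n => by
    have p := fun i => parts (χ n) (PF W i) (hχ n) (hχc n) (PF_contDiff W hW i) i
    obtain ⟨a0, b0, c0⟩ := p 0
    obtain ⟨a1, b1, c1⟩ := p 1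
    obtain ⟨a2, b2, c2⟩ := p 2
    have e1 : ∫ x, F n x = (∫ x, pd 0 (χ n) x * PF W 0 x) + (∫ x, pd 1 (χ n) x * PF W 1 x)
        + ∫ x, pd 2 (χ n) x * PF W 2 x := by
      exact int_add3 _ _ _ b0 b1 b2
    have e2 : ∫ x, χ n x * S x = -2 * ((∫ x, χ n x * pd 0 (PF W 0) x)
        + (∫ x, χ n x * pd 1 (PF W 1) x) + ∫ x, χ n x * pd 2 (PF W 2) x) := by
      rw [← int_add3 _ _ _ a0 a1 a2, ← integral_const_mul]
      congr 1; ext x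
      have := div_PF a W (fun i => (hW i).differentiable (by simp)) x (h x) (hdiv x)
      rw [← mul_add, ← mul_add, this]
      simp only [hS]; ring
    rw [e1, e2, c0, c1, c2]; ring
  have L3 : Filter.Tendsto (fun n => ∫ x, χ n x * S x) Filter.atTop (nhds 0) := by
    simp only [key]
    simpa using L1.const_mul 2
  exact tendsto_nhds_unique L2 L3

/-- Euclidean instance of the main static result (Theorem 4.4 / Proposition 4.12): a
smooth vector field `W` on `ℝ³` satisfying `curl W = a W` with `a ≠ 0` which is square
integrable on an exterior region `{|x| ≥ R}` vanishes identically. -/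
theorem stmt_7 (a : ℝ) (ha : a ≠ 0)
    (W : EuclideanSpace ℝ (Fin 3) → EuclideanSpace ℝ (Fin 3))
    (hW : ContDiff ℝ (⊤ : ℕ∞) W)
    (hcurl : ∀ x,
      pd 1 (fun y => W y 2) x - pd 2 (fun y => W y 1) x = a * W x 0 ∧
      pd 2 (fun y => W y 0) x - pd 0 (fun y => W y 2) x = a * W x 1 ∧
      pd 0 (fun y => W y 1) x - pd 1 (fun y => W y 0) x = a * W x 2)
    (R : ℝ) (hR : 0 ≤ R)
    (hL2 : IntegrableOn (fun x => ‖W x‖^2) {x : EuclideanSpace ℝ (Fin 3) | R ≤ ‖x‖}) :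
    ∀ x, W x = 0 := by
  have hWi : ∀ i, ContDiff ℝ (⊤ : ℕ∞) (fun y => W y i) := fun i =>
    (EuclideanSpace.proj i : E3 →L[ℝ] ℝ).contDiff.comp hW
  have hc : Continuous (fun x => ‖W x‖^2) := by
    have := hW.continuous
    fun_prop
  have hI : Integrable (fun x => ‖W x‖^2) := by
    have h1 : IntegrableOn (fun x => ‖W x‖^2) (Metric.closedBall 0 R) :=
      hc.continuousOn.integrableOn_compact (isCompact_closedBall _ _)
    have h2 := h1.union hL2
    rw [← integrableOn_univ]
    refine h2.mono_set fun x _ => ?_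
    rcases le_total ‖x‖ R with h | h
    · left; simpa using h
    · right; exact h
  have hn : (fun x => ‖W x‖^2) = fun x => W x 0 * W x 0 + W x 1 * W x 1 + W x 2 * W x 2 := by
    ext x
    rw [EuclideanSpace.norm_sq_eq, Fin.sum_univ_three]
    simp [sq]
  have h0 := main_int a (fun i y => W y i) hWi hcurl
    (div_zero' a ha _ _ _ (hWi 0) (hWi 1) (hWi 2) hcurl) (by simpa only [hn] using hI)
  have h1 : ∫ x, ‖W x‖^2 = 0 := by rw [hn]; exact h0
  have h2 := (integral_eq_zero_iff_of_nonneg (fun x => by positivity) hI).1 h1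
  have h3 := (hc.ae_eq_iff_eq volume continuous_const).1 h2
  intro x
  have h4 : ‖W x‖^2 = 0 := congrFun h3 x
  simpa using h4
end

section
/- Let n ≥ 1, δ > 0, and let V : ℝⁿ → ℝ be a smooth potential of symbolic decay order −δ: for every multi-index α there is a constant C_α such that |∂^α V(x)| ≤ C_α (1+|x|)^{−δ−|α|} for all x ∈ ℝⁿ. Let λ > 0 and let ψ : ℝⁿ → ℂ be smooth with ∫_{ℝⁿ} |ψ|² < ∞ and −Δψ + Vψ = λψ on ℝⁿ, where Δ = Σᵢ ∂²/∂xᵢ². Then for every α ∈ ℝ one has ∫_{ℝⁿ} e^{2α|x|} |ψ(x)|² dx < ∞. -/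
open MeasureTheory

/-- Euclidean Laplacian of a complex-valued function on `ℝⁿ`. -/
noncomputable def lap {n : ℕ} (f : EuclideanSpace ℝ (Fin n) → ℂ)
    (x : EuclideanSpace ℝ (Fin n)) : ℂ :=
  ∑ i : Fin n, fderiv ℝ (fun y => fderiv ℝ f y (EuclideanSpace.single i 1)) x
    (EuclideanSpace.single i 1)

/-- `g` is the `i`-th partial derivative of `f`. -/
def PD {n : ℕ} (i : Fin n) (f g : EuclideanSpace ℝ (Fin n) → ℝ) : Prop :=
  ∀ x, HasLineDerivAt ℝ f (g x) x (EuclideanSpace.single i 1)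

/-- squared norm -/
def sqn {n : ℕ} (x : EuclideanSpace ℝ (Fin n)) : ℝ := ∑ i, x i ^ 2

section pdcalc
variable {n : ℕ} {i : Fin n} {f g f' g' : EuclideanSpace ℝ (Fin n) → ℝ}

lemma PD.congr (h : PD i f f') (hf : ∀ x, f x = g x) (hf' : ∀ x, f' x = g' x) : PD i g g' := by
  have h1 : f = g := funext hf
  have h2 : f' = g' := funext hf'
  subst h1 h2; exact h

lemma PD.mul (hf : PD i f f') (hg : PD i g g') :
    PD i (fun x => f x * g x) (fun x => f' x * g x + f x * g' x) := by
  intro x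
  have := HasDerivAt.fun_mul (hf x) (hg x)
  simpa [HasLineDerivAt] using this

lemma PD.add (hf : PD i f f') (hg : PD i g g') :
    PD i (fun x => f x + g x) (fun x => f' x + g' x) := by
  intro x
  exact HasDerivAt.fun_add (hf x) (hg x)

lemma PD.sub (hf : PD i f f') (hg : PD i g g') :
    PD i (fun x => f x - g x) (fun x => f' x - g' x) := by
  intro x
  exact HasDerivAt.fun_sub (hf x) (hg x)

lemma PD.const (c : ℝ) : PD i (fun _ => c) (fun _ => 0) := by
  intro x
  exact hasDerivAt_const _ _

lemma PD.cmul (c : ℝ) (hf : PD i f f') : PD i (fun x => c * f x) (fun x => c * f' x) :=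
  ((PD.const c).mul hf).congr (fun _ => rfl) (fun x => by ring)

lemma PD.sum {ι : Type*} (s : Finset ι) {F F' : ι → EuclideanSpace ℝ (Fin n) → ℝ}
    (h : ∀ j ∈ s, PD i (F j) (F' j)) :
    PD i (fun x => ∑ j ∈ s, F j x) (fun x => ∑ j ∈ s, F' j x) := by
  intro x
  exact HasDerivAt.fun_sum (fun j hj => h j hj x)

lemma PD.comp {F : ℝ → ℝ} {F' : EuclideanSpace ℝ (Fin n) → ℝ} (hf : PD i f f')
    (hF : ∀ x, HasDerivAt F (F' x) (f x)) :
    PD i (fun x => F (f x)) (fun x => F' x * f' x) := by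
  intro x
  have := HasDerivAt.comp (h₂ := F) (h₂' := F' x) (h := fun t : ℝ => f (x + t • EuclideanSpace.single i 1))
    (h' := f' x) (0:ℝ) (by simpa using hF x) (hf x)
  exact this

lemma PD.coord (j : Fin n) : PD i (fun x => x j) (fun _ => if j = i then 1 else 0) := by
  intro x
  have h := ((EuclideanSpace.proj j : EuclideanSpace ℝ (Fin n) →L[ℝ] ℝ).hasFDerivAt (x := x)).hasLineDerivAt
    (EuclideanSpace.single i 1)
  convert! h using 1
  simp

lemma PD.sqnorm : PD i (sqn) (fun x => 2 * x i) := by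
  refine (PD.sum Finset.univ (fun j _ => (PD.coord (i := i) j).mul (PD.coord j))).congr
    (fun x => ?_) (fun x => ?_)
  · simp [sqn, sq]
  · simp [Finset.sum_add_distrib]; ring

lemma PD.of_contDiff (hf : ContDiff ℝ 1 f) :
    PD i f (fun x => fderiv ℝ f x (EuclideanSpace.single i 1)) := by
  intro x
  exact ((hf.differentiable (by norm_num)) x).hasFDerivAt.hasLineDerivAt _
end pdcalc

lemma continuous_sqn {n : ℕ} : Continuous (sqn (n := n)) := by
  unfold sqn; fun_prop

lemma sqn_eq {n : ℕ} (x : EuclideanSpace ℝ (Fin n)) : sqn x = ‖x‖ ^ 2 := by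
  rw [EuclideanSpace.real_norm_sq_eq]; rfl

lemma sqn_nonneg {n : ℕ} (x : EuclideanSpace ℝ (Fin n)) : 0 ≤ sqn x := by
  rw [sqn_eq]; positivity

/-- cutoff -/
noncomputable def chi {n : ℕ} (m : ℝ) (x : EuclideanSpace ℝ (Fin n)) : ℝ := max 0 (1 - sqn x / m)

section chi
variable {n : ℕ}

lemma continuous_chi (m : ℝ) : Continuous (chi (n := n) m) := by
  unfold chi
  have := continuous_sqn (n := n)
  fun_prop

lemma chi_nonneg (m : ℝ) (x : EuclideanSpace ℝ (Fin n)) : 0 ≤ chi m x := le_max_left _ _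

lemma chi_le_one {m : ℝ} (hm : 0 < m) (x : EuclideanSpace ℝ (Fin n)) : chi m x ≤ 1 := by
  have : 0 ≤ sqn x / m := div_nonneg (sqn_nonneg x) hm.le
  exact max_le (by norm_num) (by linarith)

lemma chi_eq_zero {m : ℝ} (hm : 0 < m) {x : EuclideanSpace ℝ (Fin n)} (h : m ≤ sqn x) :
    chi m x = 0 := by
  apply max_eq_left
  have : 1 ≤ sqn x / m := by rwa [le_div_iff₀ hm, one_mul]
  linarith

lemma chi_tendsto (x : EuclideanSpace ℝ (Fin n)) :
    Filter.Tendsto (fun m : ℕ => chi ((m:ℝ)+1) x) Filter.atTop (nhds 1) := by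
  have h1 : Filter.Tendsto (fun m : ℕ => sqn x / ((m:ℝ)+1)) Filter.atTop (nhds 0) :=
    tendsto_const_nhds.div_atTop (Filter.tendsto_atTop_add_const_right _ _ tendsto_natCast_atTop_atTop)
  have := (tendsto_const_nhds (x := (0:ℝ))).max ((tendsto_const_nhds (x := (1:ℝ))).sub h1)
  simpa [chi] using this

lemma hasCompactSupport_chi {m : ℝ} (hm : 0 < m) : HasCompactSupport (chi (n := n) m) := by
  apply HasCompactSupport.intro (isCompact_closedBall (0 : EuclideanSpace ℝ (Fin n)) (Real.sqrt m))
  intro x hx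
  apply chi_eq_zero hm
  rw [sqn_eq]
  simp at hx
  exact (Real.lt_sq_of_sqrt_lt hx).le

lemma hasDerivAt_max_sq (y : ℝ) : HasDerivAt (fun y : ℝ => (max 0 y) ^ 2) (2 * max 0 y) y := by
  rcases lt_trichotomy y 0 with h | h | h
  · have : (fun y : ℝ => (max 0 y) ^ 2) =ᶠ[nhds y] fun _ => 0 := by
      filter_upwards [gt_mem_nhds h] with z hz
      simp [max_eq_left hz.le]
    rw [max_eq_left h.le]
    simpa using (hasDerivAt_const y (0:ℝ)).congr_of_eventuallyEq this
  · subst h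
    rw [hasDerivAt_iff_isLittleO]
    simp
    have h2 : (fun x' : ℝ => x' ^ 2) =o[nhds 0] fun x' => x' := by
      simpa using Asymptotics.isLittleO_pow_id (𝕜 := ℝ) (n := 2) (by norm_num)
    refine Asymptotics.IsBigO.trans_isLittleO ?_ h2
    apply Asymptotics.IsBigO.of_bound 1
    refine Filter.Eventually.of_forall fun z => ?_
    rcases le_total z 0 with hz | hz
    · simp [max_eq_left hz]; positivity
    · simp [max_eq_right hz]
  · have : (fun y : ℝ => (max 0 y) ^ 2) =ᶠ[nhds y] fun y => y ^ 2 := by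
      filter_upwards [lt_mem_nhds h] with z hz
      simp [max_eq_right hz.le]
    rw [max_eq_right h.le]
    simpa using (hasDerivAt_pow 2 y).congr_of_eventuallyEq this

lemma PD.chi_sq (m : ℝ) (i : Fin n) :
    PD i (fun x => chi m x ^ 2) (fun x => -(4 / m) * (chi m x * x i)) := by
  refine (PD.comp (F := fun y => (max 0 y) ^ 2) (f := fun x => 1 - sqn x / m)
    (f' := fun x => 0 - (1 / m) * (2 * x i))
    (((PD.const 1).sub ((PD.sqnorm (i := i)).cmul (1 / m))).congr (fun x => by ring) (fun x => rfl))
    (fun x => hasDerivAt_max_sq _)).congr (fun x => rfl) (fun x => ?_)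
  simp only [chi]; ring

lemma integrable_chi_mul {m : ℝ} (hm : 0 < m) {f : EuclideanSpace ℝ (Fin n) → ℝ}
    (hf : Continuous f) : Integrable (fun x => chi m x * f x) :=
  Continuous.integrable_of_hasCompactSupport ((continuous_chi m).mul hf)
    ((hasCompactSupport_chi hm).mul_right)

/-- divergence theorem with cutoff -/
lemma div_chi {m : ℝ} (hm : 0 < m) {J D : Fin n → EuclideanSpace ℝ (Fin n) → ℝ}
    (hJ : ∀ i, Continuous (J i)) (hD : ∀ i, Continuous (D i)) (h : ∀ i, PD i (J i) (D i)) :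
    ∫ x, chi m x ^ 2 * ∑ i, D i x = (4 / m) * ∫ x, chi m x * ∑ i, x i * J i x := by
  have hc := continuous_chi (n := n) m
  have hx : ∀ i : Fin n, Continuous (fun x : EuclideanSpace ℝ (Fin n) => x i) := fun i => by fun_prop
  have key : ∀ i, ∫ x, chi m x ^ 2 * D i x = ∫ x, (4 / m) * (chi m x * (x i * J i x)) := by
    intro i
    have h1 := integral_bilinear_hasLineDerivAt_right_eq_neg_left_of_integrable (μ := volume)
      (f := fun x => chi m x ^ 2) (f' := fun x => -(4 / m) * (chi m x * x i)) (g := J i) (g' := D i)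
      (v := EuclideanSpace.single i 1) (B := ContinuousLinearMap.mul ℝ ℝ)
      (by
        refine (integrable_chi_mul hm (f := fun x => -(4 / m) * x i * J i x)
          ((continuous_const.mul (hx i)).mul (hJ i))).congr (Filter.Eventually.of_forall fun x => ?_)
        simp; ring)
      (by
        refine (integrable_chi_mul hm (f := fun x => chi m x * D i x)
          (hc.mul (hD i))).congr (Filter.Eventually.of_forall fun x => ?_)
        simp; ring)
      (by
        refine (integrable_chi_mul hm (f := fun x => chi m x * J i x)
          (hc.mul (hJ i))).congr (Filter.Eventually.of_forall fun x => ?_)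
        simp; ring)
      (fun x _ => PD.chi_sq m i x) (fun x _ => h i x)
    simp only [ContinuousLinearMap.mul_apply'] at h1
    rw [h1, ← integral_neg]
    congr 1; ext x; ring
  have e1 : ∀ x, chi m x ^ 2 * ∑ i, D i x = ∑ i, chi m x ^ 2 * D i x := fun x => Finset.mul_sum _ _ _
  have e2 : ∀ x, (4/m) * (chi m x * ∑ i, x i * J i x) = ∑ i, (4 / m) * (chi m x * (x i * J i x)) :=
    fun x => by rw [Finset.mul_sum, Finset.mul_sum]
  rw [← integral_const_mul]
  simp_rw [e1, e2]
  rw [integral_finsetSum, integral_finsetSum]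
  · exact Finset.sum_congr rfl fun i _ => key i
  · intro i _
    exact (integrable_chi_mul hm ((hx i).mul (hJ i))).const_mul _
  · intro i _
    refine (integrable_chi_mul hm (f := fun x => chi m x * D i x)
          (hc.mul (hD i))).congr (Filter.Eventually.of_forall fun x => ?_)
    simp; ring
end chi

lemma integrable_of_fatou {n : ℕ} {F : ℕ → EuclideanSpace ℝ (Fin n) → ℝ}
    {g : EuclideanSpace ℝ (Fin n) → ℝ} (M : ℝ)
    (hg : Continuous g) (hF0 : ∀ k x, 0 ≤ F k x) (hF : ∀ k, Integrable (F k))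
    (hM : ∀ k, ∫ x, F k x ≤ M) (hlim : ∀ x, Filter.Tendsto (fun k => F k x) Filter.atTop (nhds (g x))) :
    Integrable g := by
  have hg0 : ∀ x, 0 ≤ g x := fun x => ge_of_tendsto' (hlim x) fun k => hF0 k x
  refine ⟨hg.aestronglyMeasurable, ?_⟩
  rw [hasFiniteIntegral_iff_ofReal (Filter.Eventually.of_forall hg0)]
  have h1 : ∀ x, ENNReal.ofReal (g x) = Filter.liminf (fun k => ENNReal.ofReal (F k x)) Filter.atTop :=
    fun x => ((ENNReal.tendsto_ofReal (hlim x)).liminf_eq).symm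
  simp_rw [h1]
  refine lt_of_le_of_lt (lintegral_liminf_le' fun k => (hF k).1.aemeasurable.ennreal_ofReal) ?_
  refine lt_of_le_of_lt (b := ENNReal.ofReal M) ?_ ENNReal.ofReal_lt_top
  refine Filter.liminf_le_of_frequently_le' (Filter.Frequently.of_forall fun k => ?_)
  rw [← ofReal_integral_eq_lintegral_ofReal (hF k) (Filter.Eventually.of_forall (hF0 k))]
  exact ENNReal.ofReal_le_ofReal (hM k)

/-- conjugated equation data -/
structure CSol {n : ℕ} (φ h W : EuclideanSpace ℝ (Fin n) → ℝ)
    (P : Fin n → EuclideanSpace ℝ (Fin n) → ℝ)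
    (Q : Fin n → Fin n → EuclideanSpace ℝ (Fin n) → ℝ) : Prop where
  cφ : Continuous φ
  ch : Continuous h
  cW : Continuous W
  cP : ∀ i, Continuous (P i)
  cQ : ∀ i j, Continuous (Q i j)
  dφ : ∀ i, PD i φ (P i)
  dP : ∀ i j, PD i (P j) (Q i j)
  symm : ∀ i j x, Q i j x = Q j i x
  eqn : ∀ x, ∑ i, Q i i x = 2 * h x * (∑ i, x i * P i x) + W x * φ x

lemma young_aux (s p d a : ℝ) (hs : 0 ≤ s) (hp : 0 ≤ p) (h : d ^ 2 ≤ s * p) :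
    2 * a * d ≤ p + a ^ 2 * s := by
  have h1 : (2 * a * d) ^ 2 ≤ (p + a ^ 2 * s) ^ 2 := by
    have : a ^ 2 * d ^ 2 ≤ a ^ 2 * (s * p) := mul_le_mul_of_nonneg_left h (sq_nonneg a)
    nlinarith [sq_nonneg (p - a ^ 2 * s)]
  exact (abs_le_of_sq_le_sq' h1 (by positivity)).2

lemma dot_sq_le {n : ℕ} (x : EuclideanSpace ℝ (Fin n)) (p : Fin n → ℝ) :
    (∑ i, x i * p i) ^ 2 ≤ sqn x * ∑ i, p i ^ 2 :=
  Finset.sum_mul_sq_le_sq_mul_sq _ _ _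

lemma chi_mul_sqn_le {n : ℕ} {m : ℝ} (hm : 0 < m) (x : EuclideanSpace ℝ (Fin n)) :
    chi m x * sqn x ≤ m := by
  rcases le_total m (sqn x) with h | h
  · rw [chi_eq_zero hm h]; linarith
  · nlinarith [chi_nonneg m x, chi_le_one hm x, sqn_nonneg x]

lemma caccioppoli {n : ℕ} {φ h W : EuclideanSpace ℝ (Fin n) → ℝ}
    {P : Fin n → EuclideanSpace ℝ (Fin n) → ℝ}
    {Q : Fin n → Fin n → EuclideanSpace ℝ (Fin n) → ℝ} (H : CSol φ h W P Q) (C : ℝ)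
    (hh : ∀ x, h x ^ 2 * sqn x ≤ C) (hW : ∀ x, |W x| ≤ C) (hφ : Integrable (fun x => φ x ^ 2)) :
    Integrable (fun x => ∑ i, P i x ^ 2) := by
  have cx : ∀ i : Fin n, Continuous (fun x : EuclideanSpace ℝ (Fin n) => x i) := fun i => by fun_prop
  have cφ := H.cφ
  have ch := H.ch
  have cW := H.cW
  have cP := H.cP
  have cQ := H.cQ
  have cpsq : Continuous (fun x => ∑ i, P i x ^ 2) := by fun_prop
  have cdot : Continuous (fun x => ∑ i, x i * P i x) := by fun_prop
  refine integrable_of_fatou (F := fun k x => chi ((k:ℝ)+1) x ^ 2 * ∑ i, P i x ^ 2)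
    (∫ x, (10 * C + 32) * φ x ^ 2) cpsq ?_ ?_ ?_ ?_
  · intro k x; positivity
  · intro k
    have hm : (0:ℝ) < (k:ℝ) + 1 := by positivity
    refine (integrable_chi_mul hm ((continuous_chi ((k:ℝ)+1)).mul cpsq)).congr
      (Filter.Eventually.of_forall fun x => ?_)
    simp only [Pi.mul_apply]; ring
  · intro k
    set m : ℝ := (k:ℝ) + 1 with hmd
    have hm1 : (1:ℝ) ≤ m := by rw [hmd]; linarith [Nat.cast_nonneg (α := ℝ) k]
    have hm : 0 < m := by linarith
    have cc := continuous_chi (n := n) m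
    have hdiv := div_chi hm (J := fun i x => φ x * P i x)
      (D := fun i x => P i x * P i x + φ x * Q i i x)
      (fun i => by have := cP i; fun_prop) (fun i => by have := cP i; have := cQ i i; fun_prop)
      (fun i => (H.dφ i).mul (H.dP i i))
    have e1 : ∀ x, ∑ i, (P i x * P i x + φ x * Q i i x) =
        ∑ i, P i x ^ 2 + φ x * (2 * h x * (∑ i, x i * P i x) + W x * φ x) := by
      intro x
      rw [Finset.sum_add_distrib, ← Finset.mul_sum, H.eqn]
      simp only [sq]
    have e2 : ∀ x : EuclideanSpace ℝ (Fin n), ∑ i, x i * (φ x * P i x) = φ x * ∑ i, x i * P i x := by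
      intro x
      rw [Finset.mul_sum]
      exact Finset.sum_congr rfl fun i _ => by ring
    simp only [e1, e2] at hdiv
    rw [← integral_const_mul] at hdiv
    have i1 : Integrable (fun x => chi m x ^ 2 * ∑ i, P i x ^ 2) := by
      refine (integrable_chi_mul hm (cc.mul cpsq)).congr
        (Filter.Eventually.of_forall fun x => ?_)
      simp only [Pi.mul_apply]; ring
    have i2 : Integrable (fun x => chi m x ^ 2 * (∑ i, P i x ^ 2 + φ x * (2 * h x * (∑ i, x i * P i x) + W x * φ x))) := by
      refine (integrable_chi_mul hm (f := fun x => chi m x * (∑ i, P i x ^ 2 + φ x * (2 * h x * (∑ i, x i * P i x) + W x * φ x))) (by fun_prop)).congr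
        (Filter.Eventually.of_forall fun x => ?_)
      simp only []; ring
    have i3 : Integrable (fun x => 4 / m * (chi m x * (φ x * ∑ i, x i * P i x))) :=
      (integrable_chi_mul hm (by fun_prop)).const_mul _
    have i4 : Integrable (fun x => chi m x ^ 2 * (∑ i, P i x ^ 2 + φ x * (2 * h x * (∑ i, x i * P i x) + W x * φ x))
        - 4 / m * (chi m x * (φ x * ∑ i, x i * P i x))) := i2.sub i3
    have hpt : ∀ x, chi m x ^ 2 * ∑ i, P i x ^ 2 ≤
        2 * (chi m x ^ 2 * (∑ i, P i x ^ 2 + φ x * (2 * h x * (∑ i, x i * P i x) + W x * φ x))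
          - 4 / m * (chi m x * (φ x * ∑ i, x i * P i x))) + (10 * C + 32) * φ x ^ 2 := by
      intro x
      have hds := dot_sq_le x (fun i => P i x)
      have hp : 0 ≤ ∑ i, P i x ^ 2 := Finset.sum_nonneg fun i _ => sq_nonneg _
      generalize (∑ i, P i x ^ 2) = p at hds hp ⊢
      generalize (∑ i, x i * P i x) = d at hds ⊢
      have hs := sqn_nonneg x
      have hc0 := chi_nonneg m x
      have hc1 := chi_le_one hm x
      have hW' := abs_le.1 (hW x)
      have hh' := hh x
      have hcs : chi m x ≠ 0 → sqn x ≤ m := fun hne => by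
        by_contra hcon
        exact hne (chi_eq_zero hm (not_le.1 hcon).le)
      generalize sqn x = s at *
      generalize chi m x = c at *
      generalize h x = η at *
      generalize φ x = f at *
      generalize W x = w at *
      have y1 := young_aux s p d (-(4 * η * f)) hs hp hds
      have hC : 0 ≤ C := le_trans (by positivity) hh'
      have hf2 : 0 ≤ f ^ 2 := sq_nonneg f
      have hc2 : c ^ 2 ≤ 1 := by nlinarith
      have hc20 : 0 ≤ c ^ 2 := sq_nonneg c
      have z1 : c ^ 2 * (2 * (-(4 * η * f)) * d) ≤ c ^ 2 * (p + (-(4 * η * f)) ^ 2 * s) :=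
        mul_le_mul_of_nonneg_left y1 hc20
      have z2 : c ^ 2 * (η ^ 2 * s) * f ^ 2 ≤ 1 * C * f ^ 2 :=
        mul_le_mul_of_nonneg_right (mul_le_mul hc2 hh' (by positivity) (by norm_num)) hf2
      have z3 : c ^ 2 * (-w) * f ^ 2 ≤ C * f ^ 2 := by
        refine mul_le_mul_of_nonneg_right ?_ hf2
        nlinarith
      have z4 : 8 / m * (c * (f * d)) ≤ c ^ 2 * p / 2 + 32 * f ^ 2 := by
        by_cases hce : c = 0
        · subst hce; simp; positivity
        · have hsm := hcs hce
          have y2 := young_aux s (c ^ 2 * p) (c * d) (8 * f / m) hs (by positivity) (by nlinarith)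
          have : (8 * f / m) ^ 2 * s ≤ 64 * f ^ 2 := by
            rw [div_pow, div_mul_eq_mul_div, div_le_iff₀ (by positivity)]
            have : s ≤ m ^ 2 := by nlinarith
            nlinarith
          have e : 2 * (8 * f / m) * (c * d) = 2 * (8 / m * (c * (f * d))) := by ring
          linarith
      have e4 : 8 / m * (c * (f * d)) = 2 * (4 / m * (c * (f * d))) := by ring
      rw [e4] at z4
      linarith
    calc ∫ x, chi m x ^ 2 * ∑ i, P i x ^ 2 ≤ ∫ x, (2 * (chi m x ^ 2 * (∑ i, P i x ^ 2 + φ x * (2 * h x * (∑ i, x i * P i x) + W x * φ x))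
          - 4 / m * (chi m x * (φ x * ∑ i, x i * P i x))) + (10 * C + 32) * φ x ^ 2) :=
          integral_mono i1 ((i4.const_mul 2).add (hφ.const_mul _)) hpt
      _ = ∫ x, (10 * C + 32) * φ x ^ 2 := by
          rw [integral_add (i4.const_mul 2) (hφ.const_mul _), integral_const_mul,
            integral_sub i2 i3, hdiv]
          simp
  · intro x
    have := ((chi_tendsto x).pow 2).mul_const (∑ i, P i x ^ 2)
    simpa using this

lemma virial {n : ℕ} {φ h W Z K : EuclideanSpace ℝ (Fin n) → ℝ}
    {P Z' : Fin n → EuclideanSpace ℝ (Fin n) → ℝ}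
    {Q : Fin n → Fin n → EuclideanSpace ℝ (Fin n) → ℝ} (H : CSol φ h W P Q) (C : ℝ)
    (h0 : ∀ x, 0 ≤ h x) (hφ : Integrable (fun x => φ x ^ 2))
    (hP : Integrable (fun x => ∑ i, P i x ^ 2))
    (hZ : ∀ x, Z x = (n - 2) * h x + W x)
    (dZ : ∀ i, PD i Z (Z' i)) (cZ' : ∀ i, Continuous (Z' i))
    (hK : ∀ x, K x = (n / 2 - 1) * W x - (n * Z x + ∑ i, x i * Z' i x) / 2)
    (hZC : ∀ x, |Z x| ≤ C) (hKC : ∀ x, |K x| ≤ C) :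
    ∫ x, K x * φ x ^ 2 ≤ 0 := by
  have cx : ∀ i : Fin n, Continuous (fun x : EuclideanSpace ℝ (Fin n) => x i) := fun i => by fun_prop
  have cs := continuous_sqn (n := n)
  have cφ := H.cφ
  have ch := H.ch
  have cW := H.cW
  have cP := H.cP
  have cQ := H.cQ
  have cpsq : Continuous (fun x => ∑ i, P i x ^ 2) := by fun_prop
  have cdot : Continuous (fun x => ∑ i, x i * P i x) := by fun_prop
  have cZ : Continuous Z := by
    have : Z = fun x => (n - 2) * h x + W x := funext hZ
    rw [this]; fun_prop
  have cK : Continuous K := by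
    have : K = fun x => (n / 2 - 1) * W x - (n * Z x + ∑ i, x i * Z' i x) / 2 := funext hK
    rw [this]; fun_prop
  obtain ⟨c, hc⟩ : ∃ c : ℝ, c = n / 2 - 1 := ⟨_, rfl⟩
  set G : EuclideanSpace ℝ (Fin n) → ℝ := fun x =>
    ((∑ i, x i * P i x) + c * φ x) * (∑ i, x i * P i x) - sqn x * (∑ i, P i x ^ 2) / 2
      - sqn x * (Z x * φ x ^ 2) / 2 with hG
  have cG : Continuous G := by fun_prop
  have key : ∀ m : ℝ, 0 < m → ∫ x, chi m x ^ 2 * (K x * φ x ^ 2) ≤ ∫ x, 4 / m * (chi m x * G x) := by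
    intro m hm
    have cc := continuous_chi (n := n) m
    have hdot : ∀ i, PD i (fun x => ∑ j, x j * P j x) (fun x => P i x + ∑ j, x j * Q i j x) := by
      intro i
      refine (PD.sum Finset.univ (fun j _ => (PD.coord (i := i) j).mul (H.dP i j))).congr
        (fun x => rfl) (fun x => ?_)
      simp [Finset.sum_add_distrib]
    have hpsq : ∀ i, PD i (fun x => ∑ j, P j x ^ 2) (fun x => 2 * ∑ j, P j x * Q i j x) := by
      intro i
      refine (PD.sum Finset.univ (fun j _ => (H.dP i j).mul (H.dP i j))).congr
        (fun x => by simp [sq]) (fun x => ?_)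
      rw [Finset.mul_sum]
      exact Finset.sum_congr rfl fun j _ => by ring
    have hdiv := div_chi hm
      (J := fun i x => ((∑ j, x j * P j x) + c * φ x) * P i x
        - 1 / 2 * (x i * ((∑ j, P j x ^ 2) + Z x * (φ x * φ x))))
      (D := fun i x => ((P i x + ∑ j, x j * Q i j x) + c * P i x) * P i x
        + ((∑ j, x j * P j x) + c * φ x) * Q i i x
        - 1 / 2 * ((∑ j, P j x ^ 2) + Z x * (φ x * φ x)
          + x i * (2 * (∑ j, P j x * Q i j x) + (Z' i x * (φ x * φ x) + Z x * (P i x * φ x + φ x * P i x)))))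
      (fun i => by fun_prop)
      (fun i => by fun_prop)
      (fun i => by
        refine ((((hdot i).add ((H.dφ i).cmul c)).mul (H.dP i i)).sub
          (((PD.coord (i := i) i).mul ((hpsq i).add ((dZ i).mul ((H.dφ i).mul (H.dφ i))))).cmul (1/2))).congr
          (fun x => rfl) (fun x => ?_)
        simp)
    have e1 : ∀ x, ∑ i, (((P i x + ∑ j, x j * Q i j x) + c * P i x) * P i x
        + ((∑ j, x j * P j x) + c * φ x) * Q i i x
        - 1 / 2 * ((∑ j, P j x ^ 2) + Z x * (φ x * φ x)
          + x i * (2 * (∑ j, P j x * Q i j x) + (Z' i x * (φ x * φ x) + Z x * (P i x * φ x + φ x * P i x)))))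
        = 2 * h x * (∑ i, x i * P i x) ^ 2 + K x * φ x ^ 2 := by
      intro x
      have s1 : ∀ i, ((P i x + ∑ j, x j * Q i j x) + c * P i x) * P i x
        + ((∑ j, x j * P j x) + c * φ x) * Q i i x
        - 1 / 2 * ((∑ j, P j x ^ 2) + Z x * (φ x * φ x)
          + x i * (2 * (∑ j, P j x * Q i j x) + (Z' i x * (φ x * φ x) + Z x * (P i x * φ x + φ x * P i x))))
          = (1 + c) * P i x ^ 2 + (∑ j, x j * Q i j x * P i x)
            + ((∑ j, x j * P j x) + c * φ x) * Q i i x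
            - 1 / 2 * ((∑ j, P j x ^ 2) + Z x * (φ x * φ x)) - (∑ j, x i * (P j x * Q i j x))
            - φ x ^ 2 / 2 * (x i * Z' i x) - Z x * φ x * (x i * P i x) := by
        intro i
        rw [← Finset.sum_mul, ← Finset.mul_sum]
        ring
      simp_rw [s1]
      simp only [Finset.sum_sub_distrib, Finset.sum_add_distrib, ← Finset.mul_sum (a := (1 + c)),
        ← Finset.mul_sum (a := (∑ j, x j * P j x) + c * φ x), ← Finset.mul_sum (a := φ x ^ 2 / 2),
        ← Finset.mul_sum (a := Z x * φ x)]
      have s2 : ∑ i, ∑ j, x j * Q i j x * P i x = ∑ i, ∑ j, x i * (P j x * Q i j x) := by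
        rw [Finset.sum_comm]
        refine Finset.sum_congr rfl fun i _ => Finset.sum_congr rfl fun j _ => ?_
        rw [H.symm j i]; ring
      rw [s2, H.eqn, hK, hZ]
      simp only [Finset.sum_const, Finset.card_univ, Fintype.card_fin, nsmul_eq_mul]
      rw [hc]
      ring
    have e2 : ∀ x : EuclideanSpace ℝ (Fin n), ∑ i, x i * (((∑ j, x j * P j x) + c * φ x) * P i x
        - 1 / 2 * (x i * ((∑ j, P j x ^ 2) + Z x * (φ x * φ x)))) = G x := by
      intro x
      have s1 : ∀ i, x i * (((∑ j, x j * P j x) + c * φ x) * P i x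
        - 1 / 2 * (x i * ((∑ j, P j x ^ 2) + Z x * (φ x * φ x)))) =
          ((∑ j, x j * P j x) + c * φ x) * (x i * P i x) -
            (((∑ j, P j x ^ 2) + Z x * (φ x * φ x)) / 2) * x i ^ 2 := fun i => by ring
      simp_rw [s1]
      rw [Finset.sum_sub_distrib, ← Finset.mul_sum, ← Finset.mul_sum, hG]
      simp only [sqn]; ring
    simp only [e1, e2] at hdiv
    rw [integral_const_mul, ← hdiv]
    refine integral_mono ?_ ?_ ?_
    · refine (integrable_chi_mul hm (f := fun x => chi m x * (K x * φ x ^ 2)) (by fun_prop)).congr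
        (Filter.Eventually.of_forall fun x => ?_)
      simp only []; ring
    · refine (integrable_chi_mul hm (f := fun x => chi m x * (2 * h x * (∑ i, x i * P i x) ^ 2 + K x * φ x ^ 2)) (by fun_prop)).congr
        (Filter.Eventually.of_forall fun x => ?_)
      simp only []; ring
    · intro x
      simp only []
      refine mul_le_mul_of_nonneg_left ?_ (sq_nonneg _)
      have := mul_nonneg (h0 x) (sq_nonneg (∑ i, x i * P i x))
      linarith
  have C0 : 0 ≤ C := (abs_nonneg _).trans (hZC 0)
  have l1 : Filter.Tendsto (fun k : ℕ => ∫ x, chi ((k:ℝ)+1) x ^ 2 * (K x * φ x ^ 2)) Filter.atTop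
      (nhds (∫ x, K x * φ x ^ 2)) := by
    refine tendsto_integral_of_dominated_convergence (fun x => C * φ x ^ 2) ?_ (hφ.const_mul C) ?_ ?_
    · intro k
      have := continuous_chi (n := n) ((k:ℝ)+1)
      exact Continuous.aestronglyMeasurable (by fun_prop)
    · intro k
      refine Filter.Eventually.of_forall fun x => ?_
      have hm : (0:ℝ) < (k:ℝ) + 1 := by positivity
      have a0 := chi_nonneg ((k:ℝ)+1) x
      have a1 := chi_le_one hm x
      rw [norm_mul, norm_mul, Real.norm_eq_abs, Real.norm_eq_abs, Real.norm_eq_abs,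
        abs_of_nonneg (sq_nonneg _), abs_of_nonneg (sq_nonneg (φ x))]
      have := mul_le_mul_of_nonneg_right (hKC x) (sq_nonneg (φ x))
      have h2 : chi ((k:ℝ)+1) x ^ 2 ≤ 1 := by nlinarith
      have h3 : 0 ≤ |K x| * φ x ^ 2 := by positivity
      nlinarith [sq_nonneg (chi ((k:ℝ)+1) x)]
    · refine Filter.Eventually.of_forall fun x => ?_
      have := ((chi_tendsto x).pow 2).mul_const (K x * φ x ^ 2)
      simpa using this
  have l2 : Filter.Tendsto (fun k : ℕ => ∫ x, 4 / ((k:ℝ)+1) * (chi ((k:ℝ)+1) x * G x)) Filter.atTop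
      (nhds (∫ x : EuclideanSpace ℝ (Fin n), (0:ℝ))) := by
    refine tendsto_integral_of_dominated_convergence
      (fun x => 8 * (∑ i, P i x ^ 2) + 4 * (c ^ 2 + C) * φ x ^ 2) ?_
      ((hP.const_mul 8).add (hφ.const_mul _)) ?_ ?_
    · intro k
      have := continuous_chi (n := n) ((k:ℝ)+1)
      exact Continuous.aestronglyMeasurable (by fun_prop)
    · intro k
      refine Filter.Eventually.of_forall fun x => ?_
      have hm1 : (1:ℝ) ≤ (k:ℝ) + 1 := by linarith [Nat.cast_nonneg (α := ℝ) k]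
      generalize (k:ℝ) + 1 = m at *
      have hm : 0 < m := by linarith
      have hGb : |G x| ≤ 2 * (sqn x * ∑ i, P i x ^ 2) + (c ^ 2 + C * sqn x) * φ x ^ 2 := by
        have hds := dot_sq_le x (fun i => P i x)
        have hp : 0 ≤ ∑ i, P i x ^ 2 := Finset.sum_nonneg fun i _ => sq_nonneg _
        simp only [hG]
        generalize (∑ i, P i x ^ 2) = p at hds hp ⊢
        generalize (∑ i, x i * P i x) = d at hds ⊢
        have hs := sqn_nonneg x
        obtain ⟨z1, z2⟩ := abs_le.1 (hZC x)
        generalize sqn x = s at *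
        generalize φ x = f at *
        generalize Z x = z at *
        have hsp : 0 ≤ s * p := by positivity
        have hsf : 0 ≤ s * f ^ 2 := by positivity
        have q1 := mul_le_mul_of_nonneg_right z1 hsf
        have q2 := mul_le_mul_of_nonneg_right z2 hsf
        have hCsf : 0 ≤ C * (s * f ^ 2) := by positivity
        rw [abs_le]
        constructor <;> nlinarith [sq_nonneg (c * f + d), sq_nonneg (c * f - d), sq_nonneg (c * f), sq_nonneg d]
      have a0 := chi_nonneg m x
      have a1 := chi_le_one hm x
      have a2 := chi_mul_sqn_le hm x
      rw [norm_mul, norm_mul, Real.norm_eq_abs, Real.norm_eq_abs, Real.norm_eq_abs,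
        abs_of_nonneg a0, abs_of_nonneg (by positivity : 0 ≤ 4 / m)]
      have hp : 0 ≤ ∑ i, P i x ^ 2 := Finset.sum_nonneg fun i _ => sq_nonneg _
      generalize (∑ i, P i x ^ 2) = p at hGb hp ⊢
      rw [div_mul_eq_mul_div, div_le_iff₀ hm]
      have b1 := mul_le_mul_of_nonneg_left hGb a0
      have b2 := mul_le_mul_of_nonneg_right a2 hp
      have b3 := mul_le_mul_of_nonneg_right a2 (by positivity : 0 ≤ C * φ x ^ 2)
      have b4 := mul_le_mul_of_nonneg_right (a1.trans hm1) (by positivity : 0 ≤ c ^ 2 * φ x ^ 2)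
      nlinarith
    · refine Filter.Eventually.of_forall fun x => ?_
      have t1 : Filter.Tendsto (fun k : ℕ => 4 / ((k:ℝ)+1)) Filter.atTop (nhds 0) :=
        tendsto_const_nhds.div_atTop
          (Filter.tendsto_atTop_add_const_right _ _ tendsto_natCast_atTop_atTop)
      have := t1.mul ((chi_tendsto x).mul_const (G x))
      simpa using this
  have := le_of_tendsto_of_tendsto' l1 l2 (fun k => key _ (by positivity))
  simpa using this

/-- smoothed radius -/
noncomputable def rho {n : ℕ} (x : EuclideanSpace ℝ (Fin n)) : ℝ := Real.sqrt (1 + sqn x)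

section rho
variable {n : ℕ}

lemma rho_sq (x : EuclideanSpace ℝ (Fin n)) : rho x ^ 2 = 1 + sqn x :=
  Real.sq_sqrt (by linarith [sqn_nonneg x])

lemma one_le_rho (x : EuclideanSpace ℝ (Fin n)) : 1 ≤ rho x :=
  Real.one_le_sqrt.2 (by linarith [sqn_nonneg x])

lemma continuous_rho : Continuous (rho (n := n)) := by
  have := continuous_sqn (n := n)
  unfold rho; fun_prop

lemma norm_le_rho (x : EuclideanSpace ℝ (Fin n)) : ‖x‖ ≤ rho x := by
  apply Real.le_sqrt_of_sq_le
  rw [sqn_eq]; linarith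

lemma rho_le (x : EuclideanSpace ℝ (Fin n)) : rho x ≤ 1 + ‖x‖ := by
  apply Real.sqrt_le_iff.2
  rw [sqn_eq]
  have := norm_nonneg x
  constructor <;> nlinarith

lemma PD.rho (i : Fin n) : PD i (rho (n := n)) (fun x => x i / _root_.rho x) := by
  refine (PD.comp (((PD.const 1).add (PD.sqnorm (i := i)))) (F := Real.sqrt)
    (F' := fun x => 1 / (2 * Real.sqrt (1 + sqn x)))
    (fun x => Real.hasDerivAt_sqrt (by linarith [sqn_nonneg x]))).congr (fun x => rfl) (fun x => ?_)
  have h1 := one_le_rho x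
  have : Real.sqrt (1 + sqn x) = _root_.rho x := rfl
  rw [this]
  field_simp
  ring

lemma PD.comp_rho {F : ℝ → ℝ} {G : ℝ → ℝ} (hF : ∀ r, 1 ≤ r → HasDerivAt F (r * G r) r) (i : Fin n) :
    PD i (fun x => F (_root_.rho x)) (fun x => G (_root_.rho x) * x i) := by
  refine (PD.comp (PD.rho i) (F := F) (fun x => hF _ (one_le_rho x))).congr (fun x => rfl) (fun x => ?_)
  have h1 := one_le_rho x
  field_simp
end rho

noncomputable def wt (ε r : ℝ) : ℝ := (1 + ε * r)⁻¹
noncomputable def wF (α γ ε r : ℝ) : ℝ := α * r + γ * (r * wt ε r)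
noncomputable def wH (α γ ε r : ℝ) : ℝ := (α + γ * wt ε r ^ 2) / r
noncomputable def wH1 (α γ ε r : ℝ) : ℝ :=
  -(2 * ε * γ * wt ε r ^ 3) / r ^ 2 - (α + γ * wt ε r ^ 2) / r ^ 3
noncomputable def wH2 (α γ ε r : ℝ) : ℝ :=
  6 * γ * ε ^ 2 * wt ε r ^ 4 / r ^ 3 + 6 * γ * ε * wt ε r ^ 3 / r ^ 4
    + 3 * (α + γ * wt ε r ^ 2) / r ^ 5

section wts
variable {α γ ε r : ℝ}

lemma hasDerivAt_wt (hε : 0 < ε) (hr : 1 ≤ r) : HasDerivAt (wt ε) (-(ε * wt ε r ^ 2)) r := by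
  have h0 : (1 + ε * r) ≠ 0 := by positivity
  have := (((hasDerivAt_id r).const_mul ε).const_add 1).inv h0
  convert! this using 1
  simp [wt]; field_simp

lemma wt_rel (hε : 0 < ε) (hr : 1 ≤ r) : ε * r * wt ε r = 1 - wt ε r := by
  have h0 : (1 + ε * r) ≠ 0 := by positivity
  unfold wt; field_simp; ring

lemma hasDerivAt_wF (hε : 0 < ε) (hr : 1 ≤ r) :
    HasDerivAt (wF α γ ε) (r * wH α γ ε r) r := by
  have h := ((hasDerivAt_id r).const_mul α).add (((hasDerivAt_id r).mul (hasDerivAt_wt hε hr)).const_mul γ)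
  convert! h using 1
  have := wt_rel hε hr
  have hr0 : r ≠ 0 := by positivity
  unfold wH
  simp only [id]
  field_simp
  linear_combination (γ * wt ε r) * this

lemma hasDerivAt_wH (hε : 0 < ε) (hr : 1 ≤ r) :
    HasDerivAt (wH α γ ε) (r * wH1 α γ ε r) r := by
  have hr0 : r ≠ 0 := by positivity
  have h := ((((hasDerivAt_wt hε hr).pow 2).const_mul γ).const_add α).div (hasDerivAt_id r) hr0
  convert! h using 1
  unfold wH1
  simp only [id]
  field_simp
  simp; ring

lemma hasDerivAt_wH1 (hε : 0 < ε) (hr : 1 ≤ r) :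
    HasDerivAt (wH1 α γ ε) (r * wH2 α γ ε r) r := by
  have hr0 : r ≠ 0 := by positivity
  have h := (((((hasDerivAt_wt hε hr).pow 3).const_mul (2 * ε * γ)).neg).div ((hasDerivAt_id r).pow 2)
    (by simp [hr0])).sub
    (((((hasDerivAt_wt hε hr).pow 2).const_mul γ).const_add α).div ((hasDerivAt_id r).pow 3) (by simp [hr0]))
  convert! h using 1
  unfold wH2
  simp
  field_simp
  ring

lemma wt_pos (hε : 0 < ε) (hr : 1 ≤ r) : 0 < wt ε r := by unfold wt; positivity
lemma wt_le_one (hε : 0 < ε) (hr : 1 ≤ r) : wt ε r ≤ 1 := by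
  unfold wt; apply inv_le_one_of_one_le₀; nlinarith

lemma wF_le (hγ : 0 ≤ γ) (hε : 0 < ε) (hr : 1 ≤ r) : wF α γ ε r ≤ (α + γ) * r := by
  have := wt_le_one hε hr
  unfold wF
  have : r * wt ε r ≤ r := by nlinarith
  nlinarith

lemma wF_le' (hγ : 0 ≤ γ) (hε : 0 < ε) (hr : 1 ≤ r) : wF α γ ε r ≤ α * r + γ / ε := by
  have h1 := wt_rel hε hr
  have h2 := wt_pos hε hr
  have : r * wt ε r ≤ 1 / ε := by rw [le_div_iff₀ hε]; nlinarith
  unfold wF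
  have := mul_le_mul_of_nonneg_left this hγ
  rw [mul_one_div] at this
  linarith

lemma w_rel (hε : 0 < ε) (hr : 1 ≤ r) : ∃ t : ℝ, 0 ≤ t ∧ t ≤ 1 ∧
    wH α γ ε r = (α + γ * t ^ 2) / r ∧
    wH1 α γ ε r = -(2 * γ * (t ^ 2 * (1 - t)) + (α + γ * t ^ 2)) / r ^ 3 ∧
    wH2 α γ ε r = (6 * γ * (t ^ 2 * (1 - t) ^ 2) + 6 * γ * (t ^ 2 * (1 - t)) + 3 * (α + γ * t ^ 2)) / r ^ 5 := by
  have hr0 : r ≠ 0 := by positivity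
  refine ⟨wt ε r, (wt_pos hε hr).le, wt_le_one hε hr, rfl, ?_, ?_⟩
  · rw [← wt_rel hε hr]; unfold wH1; field_simp; ring
  · rw [← wt_rel hε hr]; unfold wH2; field_simp

lemma w_low1 {t : ℝ} (t0 : 0 ≤ t) (t1 : t ≤ 1) : t ^ 2 * (1 - t) * 2 - t ^ 2 ≤ 1 / 4 := by
  nlinarith [mul_nonneg t0 (sq_nonneg (t - 1/4))]

lemma w_low2 {g w B : ℝ} (hα : 0 ≤ α) (g0 : 0 ≤ g) (g1 : g ≤ γ) (w0 : 0 ≤ w) (w1 : w ≤ 1)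
    (hB : α - γ / 4 ≤ B) : -(γ ^ 2 / 2) ≤ w * ((α + g) * B) := by
  have hγ : 0 ≤ γ := g0.trans g1
  rcases le_total 0 B with hB0 | hB0
  · have : 0 ≤ w * ((α + g) * B) := by positivity
    linarith [sq_nonneg γ]
  · have h1 : (α + g) * (-B) ≤ (5 / 4 * γ) * (γ / 4) :=
      mul_le_mul (by linarith) (by linarith) (by linarith) (by linarith)
    have h2 : 0 ≤ (α + g) * (-B) := mul_nonneg (by linarith) (by linarith)
    have h3 := mul_le_mul_of_nonneg_right w1 h2
    nlinarith [sq_nonneg γ]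

lemma w_bounds (hα : 0 ≤ α) (hγ : 0 ≤ γ) (hε : 0 < ε) (hr : 1 ≤ r) {s : ℝ} (hs : 0 ≤ s)
    (hsr : r ^ 2 = 1 + s) :
    0 ≤ wH α γ ε r ∧ wH α γ ε r ≤ (α + γ) / r ∧ |wH1 α γ ε r * s| ≤ 3 * (α + γ) / r ∧
    |wH2 α γ ε r * s ^ 2| ≤ 15 * (α + γ) / r ∧ wH α γ ε r ^ 2 * s ≤ (α + γ) ^ 2 ∧
    -(γ ^ 2 / 2) ≤ wH α γ ε r * s * (2 * wH α γ ε r + wH1 α γ ε r * s) ∧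
    wH α γ ε r * s * (2 * wH α γ ε r + wH1 α γ ε r * s) ≤ 2 * (α + γ) ^ 2 := by
  obtain ⟨t, t0, t1, e1, e2, e3⟩ := w_rel (α := α) (γ := γ) hε hr
  rw [e1, e2, e3]
  have hr0 : 0 < r := by linarith
  have hsr2 : s ≤ r ^ 2 := by linarith
  have a1 : t ^ 2 ≤ 1 := by nlinarith
  have a1' : 0 ≤ t ^ 2 := sq_nonneg t
  have b0 : 0 ≤ t ^ 2 * (1 - t) := mul_nonneg a1' (by linarith)
  have b1 : t ^ 2 * (1 - t) ≤ 1 := by nlinarith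
  have c0 : 0 ≤ t ^ 2 * (1 - t) ^ 2 := by positivity
  have c1 : t ^ 2 * (1 - t) ^ 2 ≤ 1 := by nlinarith
  have g1 : γ * t ^ 2 ≤ γ := by nlinarith
  have g1' : 0 ≤ γ * t ^ 2 := by positivity
  have g2 : γ * (t ^ 2 * (1 - t)) ≤ γ := by nlinarith
  have g2' : 0 ≤ γ * (t ^ 2 * (1 - t)) := by positivity
  have g3 : γ * (t ^ 2 * (1 - t) ^ 2) ≤ γ := by nlinarith
  have g3' : 0 ≤ γ * (t ^ 2 * (1 - t) ^ 2) := by positivity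
  have hprod : (α + γ * t ^ 2) / r * s * (2 * ((α + γ * t ^ 2) / r) + -(2 * γ * (t ^ 2 * (1 - t)) + (α + γ * t ^ 2)) / r ^ 3 * s)
      = (s / r ^ 2) * ((α + γ * t ^ 2) * (2 * (α + γ * t ^ 2) - (s / r ^ 2) * (2 * (γ * (t ^ 2 * (1 - t))) + (α + γ * t ^ 2)))) := by
    field_simp; ring
  have w0 : 0 ≤ s / r ^ 2 := by positivity
  have w1 : s / r ^ 2 ≤ 1 := by rw [div_le_one (by positivity)]; exact hsr2
  refine ⟨by positivity, ?_, ?_, ?_, ?_, ?_, ?_⟩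
  · gcongr
  · rw [abs_mul, abs_div, abs_neg, abs_of_nonneg (by positivity : 0 ≤ r ^ 3), abs_of_nonneg hs,
      abs_of_nonneg (by linarith), div_mul_eq_mul_div, div_le_div_iff₀ (by positivity) hr0]
    have : (2 * γ * (t ^ 2 * (1 - t)) + (α + γ * t ^ 2)) ≤ 3 * (α + γ) := by linarith
    calc _ ≤ (3 * (α + γ)) * r ^ 2 * r := by gcongr
      _ = _ := by ring
  · rw [abs_mul, abs_div, abs_of_nonneg (by positivity : 0 ≤ r ^ 5), abs_of_nonneg (by positivity : 0 ≤ s ^ 2),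
      abs_of_nonneg (by linarith), div_mul_eq_mul_div, div_le_div_iff₀ (by positivity) hr0]
    have : 6 * γ * (t ^ 2 * (1 - t) ^ 2) + 6 * γ * (t ^ 2 * (1 - t)) + 3 * (α + γ * t ^ 2) ≤ 15 * (α + γ) := by linarith
    calc _ ≤ (15 * (α + γ)) * (r ^ 2) ^ 2 * r := by gcongr
      _ = _ := by ring
  · rw [div_pow, div_mul_eq_mul_div, div_le_iff₀ (by positivity)]
    gcongr
  · rw [hprod]
    generalize s / r ^ 2 = w at *
    set g := γ * t ^ 2 with hg
    set b := γ * (t ^ 2 * (1 - t)) with hb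
    have hB : α - γ / 4 ≤ 2 * (α + g) - w * (2 * b + (α + g)) := by
      have : w * (2 * b + (α + g)) ≤ 1 * (2 * b + (α + g)) := by gcongr
      have h2 : 2 * b - g ≤ γ / 4 := by
        have h3 := mul_le_mul_of_nonneg_left (w_low1 t0 t1) hγ
        rw [hb, hg]; linarith
      linarith
    exact w_low2 hα g1' g1 w0 w1 hB
  · rw [hprod]
    generalize s / r ^ 2 = w at *
    set g := γ * t ^ 2 with hg
    set b := γ * (t ^ 2 * (1 - t)) with hb
    have h1 : 0 ≤ w * (2 * b + (α + g)) := by positivity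
    have h2 : (α + g) * (2 * (α + g) - w * (2 * b + (α + g))) ≤ (α + g) * (2 * (α + g)) := by
      gcongr; linarith
    have h3 : (α + g) * (2 * (α + g)) ≤ (α + γ) * (2 * (α + γ)) := by gcongr
    have h4 : w * ((α + g) * (2 * (α + g) - w * (2 * b + (α + g)))) ≤ w * ((α + γ) * (2 * (α + γ))) :=
      mul_le_mul_of_nonneg_left (h2.trans h3) w0
    have h5 : w * ((α + γ) * (2 * (α + γ))) ≤ 1 * ((α + γ) * (2 * (α + γ))) := by gcongr
    linarith
end wts

lemma conj_sol {n : ℕ} {u f h h1 V : EuclideanSpace ℝ (Fin n) → ℝ}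
    {p : Fin n → EuclideanSpace ℝ (Fin n) → ℝ}
    {q : Fin n → Fin n → EuclideanSpace ℝ (Fin n) → ℝ} (lam : ℝ)
    (cu : Continuous u) (cp : ∀ i, Continuous (p i)) (cq : ∀ i j, Continuous (q i j))
    (cf : Continuous f) (ch : Continuous h) (ch1 : Continuous h1) (cV : Continuous V)
    (du : ∀ i, PD i u (p i)) (dp : ∀ i j, PD i (p j) (q i j)) (hsymm : ∀ i j x, q i j x = q j i x)
    (heq : ∀ x, ∑ i, q i i x = (V x - lam) * u x)
    (df : ∀ i, PD i f (fun x => h x * x i)) (dh : ∀ i, PD i h (fun x => h1 x * x i)) :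
    CSol (fun x => Real.exp (f x) * u x) h
      (fun x => n * h x + h1 x * sqn x - h x ^ 2 * sqn x + V x - lam)
      (fun i x => Real.exp (f x) * (p i x + h x * (x i * u x)))
      (fun i j x => (Real.exp (f x) * (h x * x i)) * (p j x + h x * (x j * u x))
        + Real.exp (f x) * (q i j x + (h1 x * x i * (x j * u x)
          + h x * ((if j = i then 1 else 0) * u x + x j * p i x)))) := by
  have cs := continuous_sqn (n := n)
  have dE : ∀ i, PD i (fun x => Real.exp (f x)) (fun x => Real.exp (f x) * (h x * x i)) :=
    fun i => PD.comp (df i) (F := Real.exp) (fun x => Real.hasDerivAt_exp _)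
  refine ⟨by fun_prop, ch, by fun_prop, fun i => by fun_prop, fun i j => by fun_prop, ?_, ?_, ?_, ?_⟩
  · intro i
    refine ((dE i).mul (du i)).congr (fun x => rfl) (fun x => by ring)
  · intro i j
    exact (dE i).mul ((dp i j).add ((dh i).mul ((PD.coord j).mul (du i))))
  · intro i j x
    simp only []
    rw [hsymm i j]
    by_cases hij : i = j
    · subst hij; ring
    · rw [if_neg hij, if_neg (Ne.symm hij)]; ring
  · intro x
    simp only [if_true]
    have s1 : ∀ i, Real.exp (f x) * (h x * x i) * (p i x + h x * (x i * u x)) +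
        Real.exp (f x) * (q i i x + (h1 x * x i * (x i * u x) + h x * (1 * u x + x i * p i x)))
        = Real.exp (f x) * q i i x + (Real.exp (f x) * (2 * h x)) * (x i * p i x) +
          (Real.exp (f x) * u x * (h x ^ 2 + h1 x)) * x i ^ 2 + Real.exp (f x) * h x * u x := fun i => by ring
    have s2 : ∀ i, x i * (Real.exp (f x) * (p i x + h x * (x i * u x))) =
        Real.exp (f x) * (x i * p i x) + (Real.exp (f x) * h x * u x) * x i ^ 2 := fun i => by ring
    simp_rw [s1, s2]
    simp only [Finset.sum_add_distrib, ← Finset.mul_sum, heq]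
    simp only [Finset.sum_const, Finset.card_univ, Fintype.card_fin, nsmul_eq_mul, sqn]
    ring

lemma boot_step {n : ℕ} {u V : EuclideanSpace ℝ (Fin n) → ℝ}
    {p V' : Fin n → EuclideanSpace ℝ (Fin n) → ℝ}
    {q : Fin n → Fin n → EuclideanSpace ℝ (Fin n) → ℝ} {lam γ α CV : ℝ}
    (cu : Continuous u) (cp : ∀ i, Continuous (p i)) (cq : ∀ i j, Continuous (q i j))
    (cV : Continuous V) (cV' : ∀ i, Continuous (V' i))
    (du : ∀ i, PD i u (p i)) (dp : ∀ i j, PD i (p j) (q i j)) (hsymm : ∀ i j x, q i j x = q j i x)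
    (dV : ∀ i, PD i V (V' i))
    (heq : ∀ x, ∑ i, q i i x = (V x - lam) * u x)
    (hV1 : ∀ x, |V x| ≤ CV) (hV2 : ∀ x, |V x + (∑ i, x i * V' i x) / 2| ≤ CV)
    (hV3 : ∀ η : ℝ, 0 < η → ∃ R, ∀ x, R ≤ rho x → |V x + (∑ i, x i * V' i x) / 2| ≤ η)
    (hγ : 0 < γ) (hγl : γ ^ 2 = lam) (hα : 0 ≤ α)
    (hu : Integrable (fun x => u x ^ 2))
    (hI : Integrable (fun x => Real.exp (α * rho x) ^ 2 * u x ^ 2)) :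
    Integrable (fun x => Real.exp ((α + γ) * rho x) ^ 2 * u x ^ 2) := by
  have hlam : 0 < lam := by rw [← hγl]; positivity
  have cr := continuous_rho (n := n)
  have cs := continuous_sqn (n := n)
  have hCV : 0 ≤ CV := (abs_nonneg _).trans (hV1 0)
  obtain ⟨a, ha⟩ : ∃ a, a = α + γ := ⟨_, rfl⟩
  have ha0 : 0 < a := by linarith
  obtain ⟨A, hA⟩ : ∃ A : ℝ, A = ((n:ℝ) ^ 2 / 2 + 3 * (n + 1) + 8) * a := ⟨_, rfl⟩
  have hA0 : 0 < A := by rw [hA]; positivity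
  obtain ⟨C, hC⟩ : ∃ C : ℝ, C = lam + CV + 2 * a ^ 2 + γ ^ 2 + A + (2 * n + 5) * a := ⟨_, rfl⟩
  have hC0 : 0 < C := by rw [hC]; positivity
  obtain ⟨R1, hR1⟩ := hV3 (lam / 8) (by positivity)
  obtain ⟨R0, hR0⟩ : ∃ R0, R0 = max R1 (8 * A / lam) := ⟨_, rfl⟩
  -- per-epsilon estimate
  have main : ∀ ε : ℝ, 0 < ε →
      Integrable (fun x => (Real.exp (wF α γ ε (rho x)) * u x) ^ 2) ∧
      ∫ x, (Real.exp (wF α γ ε (rho x)) * u x) ^ 2 ≤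
        (4 / lam) * ∫ x, (C + lam) * Real.exp (a * R0) ^ 2 * u x ^ 2 := by
    intro ε hε
    have cF : ∀ {G G' : ℝ → ℝ}, (∀ r, 1 ≤ r → HasDerivAt G (G' r) r) →
        Continuous (fun x : EuclideanSpace ℝ (Fin n) => G (rho x)) := by
      intro G G' hG
      rw [continuous_iff_continuousAt]
      intro x
      exact ContinuousAt.comp (f := rho) (g := G) (hG _ (one_le_rho x)).continuousAt cr.continuousAt
    have cf := cF (fun r hr => hasDerivAt_wF (α := α) (γ := γ) hε hr)
    have ch := cF (fun r hr => hasDerivAt_wH (α := α) (γ := γ) hε hr)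
    have ch1 := cF (fun r hr => hasDerivAt_wH1 (α := α) (γ := γ) hε hr)
    have ch2 : Continuous (fun x : EuclideanSpace ℝ (Fin n) => wH2 α γ ε (rho x)) := by
      have hne : ∀ x : EuclideanSpace ℝ (Fin n), rho x ≠ 0 := fun x => by linarith [one_le_rho x]
      have hne' : ∀ x : EuclideanSpace ℝ (Fin n), 1 + ε * rho x ≠ 0 := fun x => by
        have := one_le_rho x
        positivity
      unfold wH2 wt
      fun_prop (disch := intro x; simp [hne, hne'])
    have df := fun i : Fin n => PD.comp_rho (fun r hr => hasDerivAt_wF (α := α) (γ := γ) hε hr) i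
    have dh := fun i : Fin n => PD.comp_rho (fun r hr => hasDerivAt_wH (α := α) (γ := γ) hε hr) i
    have dh1 := fun i : Fin n => PD.comp_rho (fun r hr => hasDerivAt_wH1 (α := α) (γ := γ) hε hr) i
    have bd := fun x : EuclideanSpace ℝ (Fin n) =>
      w_bounds hα hγ.le hε (one_le_rho x) (sqn_nonneg x) (rho_sq x)
    rw [← ha] at bd
    obtain ⟨f, hf⟩ : ∃ f : EuclideanSpace ℝ (Fin n) → ℝ, f = fun x => wF α γ ε (rho x) := ⟨_, rfl⟩
    obtain ⟨h, hh⟩ : ∃ h : EuclideanSpace ℝ (Fin n) → ℝ, h = fun x => wH α γ ε (rho x) := ⟨_, rfl⟩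
    obtain ⟨h1, hh1⟩ : ∃ h1 : EuclideanSpace ℝ (Fin n) → ℝ, h1 = fun x => wH1 α γ ε (rho x) := ⟨_, rfl⟩
    obtain ⟨h2, hh2⟩ : ∃ h2 : EuclideanSpace ℝ (Fin n) → ℝ, h2 = fun x => wH2 α γ ε (rho x) := ⟨_, rfl⟩
    have hf' : ∀ x, wF α γ ε (rho x) = f x := fun x => by rw [hf]
    have hh' : ∀ x, wH α γ ε (rho x) = h x := fun x => by rw [hh]
    have hh1' : ∀ x, wH1 α γ ε (rho x) = h1 x := fun x => by rw [hh1]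
    have hh2' : ∀ x, wH2 α γ ε (rho x) = h2 x := fun x => by rw [hh2]
    have fle : ∀ x, f x ≤ a * rho x := fun x => by
      rw [hf, ha]; exact wF_le hγ.le hε (one_le_rho x)
    have fle' : ∀ x, f x ≤ α * rho x + γ / ε := fun x => by
      rw [hf]; exact wF_le' hγ.le hε (one_le_rho x)
    simp only [hf', hh', hh1', hh2'] at cf ch ch1 ch2 df dh dh1 bd ⊢
    clear hf' hh' hh1' hh2' hf hh hh1 hh2
    have H := conj_sol lam cu cp cq cf ch ch1 cV du dp hsymm heq df dh
    have iφ : Integrable (fun x => (Real.exp (f x) * u x) ^ 2) := by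
      refine (hI.const_mul (Real.exp (γ / ε) ^ 2)).mono' (Continuous.aestronglyMeasurable (by fun_prop))
        (Filter.Eventually.of_forall fun x => ?_)
      have e : Real.exp (γ / ε) ^ 2 * (Real.exp (α * rho x) * u x) ^ 2
          = Real.exp (γ / ε + α * rho x) ^ 2 * u x ^ 2 := by rw [Real.exp_add]; ring
      have e' : Real.exp (γ / ε) ^ 2 * (Real.exp (α * rho x) ^ 2 * u x ^ 2)
          = Real.exp (γ / ε + α * rho x) ^ 2 * u x ^ 2 := by rw [Real.exp_add]; ring
      have := fle' x
      rw [Real.norm_eq_abs, abs_of_nonneg (sq_nonneg _)]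
      simp only [e, e']
      rw [mul_pow]
      gcongr
      linarith
    -- bounds
    have bd2 : ∀ x, 0 ≤ h x ∧ h x ≤ a ∧ |h1 x * sqn x| ≤ 3 * a ∧ h x ^ 2 * sqn x ≤ a ^ 2 ∧
        0 ≤ h x ^ 2 * sqn x := by
      intro x
      obtain ⟨b1, b2, b3, b4, b5, b6, b7⟩ := bd x
      have hr := one_le_rho x
      have d1 : a / rho x ≤ a := div_le_self ha0.le hr
      have d2 : 3 * a / rho x ≤ 3 * a := div_le_self (by positivity) hr
      exact ⟨b1, b2.trans d1, b3.trans d2, b5, mul_nonneg (sq_nonneg _) (sqn_nonneg x)⟩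
    have hWC : ∀ x, |n * h x + h1 x * sqn x - h x ^ 2 * sqn x + V x - lam| ≤ C := by
      intro x
      obtain ⟨b1, b2, b3, b4, b5⟩ := bd2 x
      obtain ⟨c1, c2⟩ := abs_le.1 b3
      obtain ⟨v1, v2⟩ := abs_le.1 (hV1 x)
      have n1 : (n:ℝ) * h x ≤ n * a := by gcongr
      have n2 : 0 ≤ (n:ℝ) * h x := by positivity
      have n3 : 0 ≤ (n:ℝ) * a := by positivity
      have a2 : 0 ≤ a ^ 2 := by positivity
      have g2 : 0 ≤ γ ^ 2 := by positivity
      rw [abs_le, hC]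
      constructor <;> linarith
    have hhC : ∀ x, h x ^ 2 * sqn x ≤ C := by
      intro x
      obtain ⟨b1, b2, b3, b4, b5⟩ := bd2 x
      refine b4.trans ?_
      rw [hC]
      have : 0 ≤ (2 * n + 5) * a := by positivity
      nlinarith [sq_nonneg a, sq_nonneg γ]
    have iP := caccioppoli H C hhC hWC iφ
    obtain ⟨K, hK⟩ : ∃ K : EuclideanSpace ℝ (Fin n) → ℝ, K = fun x =>
      lam - (V x + (∑ i, x i * V' i x) / 2) + h x * sqn x * (2 * h x + h1 x * sqn x)
        - (n:ℝ) ^ 2 / 2 * h x - (n + 1) * (h1 x * sqn x) - h2 x * sqn x ^ 2 / 2 := ⟨_, rfl⟩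
    have lowb : ∀ x, |(n:ℝ) ^ 2 / 2 * h x + (n + 1) * (h1 x * sqn x) + h2 x * sqn x ^ 2 / 2| ≤ A / rho x := by
      intro x
      obtain ⟨b1, b2, b3, b4, b5, b6, b7⟩ := bd x
      have hr := one_le_rho x
      have eA : A / rho x = (n:ℝ) ^ 2 / 2 * (a / rho x) + (n + 1) * (3 * a / rho x) + (16 * a / rho x) / 2 := by
        rw [hA]; ring
      have e16 : 15 * a / rho x ≤ 16 * a / rho x := by gcongr; norm_num
      obtain ⟨c1, c2⟩ := abs_le.1 b3
      obtain ⟨c3, c4⟩ := abs_le.1 b4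
      have n1 : (n:ℝ) ^ 2 / 2 * h x ≤ (n:ℝ) ^ 2 / 2 * (a / rho x) := by gcongr
      have n2 : 0 ≤ (n:ℝ) ^ 2 / 2 * h x := by positivity
      have n3 : ((n:ℝ) + 1) * (h1 x * sqn x) ≤ (n + 1) * (3 * a / rho x) := by gcongr
      have n4 : ((n:ℝ) + 1) * (-(3 * a / rho x)) ≤ (n + 1) * (h1 x * sqn x) := by gcongr
      have n5 : 0 ≤ (n:ℝ) ^ 2 / 2 * (a / rho x) := by positivity
      rw [abs_le, eA]
      constructor <;> linarith
    have hKC : ∀ x, |K x| ≤ C := by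
      intro x
      obtain ⟨b1, b2, b3, b4, b5, b6, b7⟩ := bd x
      have hr := one_le_rho x
      have d1 : A / rho x ≤ A := div_le_self hA0.le hr
      obtain ⟨c1, c2⟩ := abs_le.1 (lowb x)
      obtain ⟨v1, v2⟩ := abs_le.1 (hV2 x)
      have n3 : 0 ≤ (2 * n + 5) * a := by positivity
      have a2 : 0 ≤ a ^ 2 := by positivity
      have g2 : 0 ≤ γ ^ 2 := by positivity
      rw [abs_le, hC, hK]
      constructor <;> linarith
    have hKl : ∀ x, R0 ≤ rho x → lam / 4 ≤ K x := by
      intro x hx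
      obtain ⟨b1, b2, b3, b4, b5, b6, b7⟩ := bd x
      have hr := one_le_rho x
      rw [hR0] at hx
      obtain ⟨v1, v2⟩ := abs_le.1 (hR1 x ((le_max_left _ _).trans hx))
      have hx2 := (le_max_right _ _).trans hx
      have d1 : A / rho x ≤ lam / 8 := by
        rw [div_le_iff₀ hlam] at hx2
        rw [div_le_iff₀ (by linarith)]
        linarith
      obtain ⟨c1, c2⟩ := abs_le.1 (lowb x)
      rw [hK]
      simp only []
      linarith
    have hvir := virial H C (Z := fun x => (2 * n - 2) * h x + h1 x * sqn x - h x * h x * sqn x + V x - lam)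
      (Z' := fun i x => ((2 * n - 2) * (h1 x * x i) + (h2 x * x i * sqn x + h1 x * (2 * x i))
        - ((h1 x * x i * h x + h x * (h1 x * x i)) * sqn x + h x * h x * (2 * x i)) + V' i x) - 0)
      (K := K) (fun x => (bd2 x).1) iφ iP
      (fun x => by ring)
      (fun i => (((((dh i).cmul (2 * n - 2)).add ((dh1 i).mul PD.sqnorm)).sub
        (((dh i).mul (dh i)).mul PD.sqnorm)).add (dV i)).sub (PD.const lam))
      (fun i => by have := cV' i; fun_prop)
      (fun x => by
        have s1 : ∀ i, x i * (((2 * n - 2) * (h1 x * x i) + (h2 x * x i * sqn x + h1 x * (2 * x i))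
          - ((h1 x * x i * h x + h x * (h1 x * x i)) * sqn x + h x * h x * (2 * x i)) + V' i x) - 0)
          = ((2 * n - 2) * h1 x + h2 x * sqn x + 2 * h1 x - 2 * h x * h1 x * sqn x - 2 * h x ^ 2) * x i ^ 2
            + x i * V' i x := fun i => by ring
        simp_rw [s1]
        rw [Finset.sum_add_distrib, ← Finset.mul_sum]
        have s2 : ∑ i, x i ^ 2 = sqn x := rfl
        rw [s2, hK]
        ring)
      (fun x => by
        obtain ⟨b1, b2, b3, b4, b5⟩ := bd2 x
        obtain ⟨c1, c2⟩ := abs_le.1 b3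
        obtain ⟨v1, v2⟩ := abs_le.1 (hV1 x)
        have n1 : (n:ℝ) * h x ≤ n * a := by gcongr
        have n2 : 0 ≤ (n:ℝ) * h x := by positivity
        have n3 : 0 ≤ (n:ℝ) * a := by positivity
        have a2 : 0 ≤ a ^ 2 := by positivity
        have g2 : 0 ≤ γ ^ 2 := by positivity
        rw [abs_le, hC]
        constructor <;> linarith)
      hKC
    refine ⟨iφ, ?_⟩
    have cK : Continuous K := by rw [hK]; fun_prop
    have iK : Integrable (fun x => K x * (Real.exp (f x) * u x) ^ 2) := by
      refine (iφ.const_mul C).mono' (Continuous.aestronglyMeasurable (by fun_prop))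
        (Filter.Eventually.of_forall fun x => ?_)
      rw [norm_mul, Real.norm_eq_abs, Real.norm_eq_abs, abs_of_nonneg (sq_nonneg (Real.exp (f x) * u x))]
      have := hKC x
      gcongr
    have hpt : ∀ x, lam / 4 * (Real.exp (f x) * u x) ^ 2 ≤ K x * (Real.exp (f x) * u x) ^ 2
        + (C + lam) * Real.exp (a * R0) ^ 2 * u x ^ 2 := by
      intro x
      rcases le_total R0 (rho x) with hx | hx
      · have := mul_le_mul_of_nonneg_right (hKl x hx) (sq_nonneg (Real.exp (f x) * u x))
        have h3 : 0 ≤ (C + lam) * Real.exp (a * R0) ^ 2 * u x ^ 2 := by positivity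
        linarith
      · have h3 : (Real.exp (f x) * u x) ^ 2 ≤ Real.exp (a * R0) ^ 2 * u x ^ 2 := by
          rw [mul_pow]
          have := (fle x).trans (mul_le_mul_of_nonneg_left hx ha0.le)
          gcongr
        have h4 := (abs_le.1 (hKC x)).1
        have h5 := sq_nonneg (Real.exp (f x) * u x)
        have h6 : (C + lam) * (Real.exp (f x) * u x) ^ 2 ≤ (C + lam) * (Real.exp (a * R0) ^ 2 * u x ^ 2) :=
          mul_le_mul_of_nonneg_left h3 (by positivity)
        have h7 := mul_le_mul_of_nonneg_right h4 h5
        have h8 := mul_nonneg hlam.le h5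
        linarith
    have hint := integral_mono (iφ.const_mul (lam / 4)) (iK.add (hu.const_mul ((C + lam) * Real.exp (a * R0) ^ 2))) hpt
    have e3 := integral_add iK (hu.const_mul ((C + lam) * Real.exp (a * R0) ^ 2))
    simp only [Pi.add_apply] at hint
    rw [e3, integral_const_mul] at hint
    rw [div_mul_eq_mul_div, le_div_iff₀ hlam]
    linarith
  -- Fatou
  rw [← ha]
  refine integrable_of_fatou (F := fun k x => (Real.exp (wF α γ (1 / ((k:ℝ)+1)) (rho x)) * u x) ^ 2)
    ((4 / lam) * ∫ x, (C + lam) * Real.exp (a * R0) ^ 2 * u x ^ 2) (by fun_prop) ?_ ?_ ?_ ?_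
  · intro k x; positivity
  · intro k; exact (main _ (by positivity)).1
  · intro k; exact (main _ (by positivity)).2
  · intro x
    have t1 : Filter.Tendsto (fun k : ℕ => 1 / ((k:ℝ) + 1)) Filter.atTop (nhds 0) :=
      tendsto_one_div_add_atTop_nhds_zero_nat
    have t2 : Filter.Tendsto (fun k : ℕ => wt (1 / ((k:ℝ) + 1)) (rho x)) Filter.atTop (nhds 1) := by
      have := ((t1.mul_const (rho x)).const_add 1).inv₀ (by simp)
      simpa [wt] using this
    have t3 : Filter.Tendsto (fun k : ℕ => wF α γ (1 / ((k:ℝ) + 1)) (rho x)) Filter.atTop (nhds (a * rho x)) := by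
      have := ((t2.const_mul (rho x)).const_mul γ).const_add (α * rho x)
      have e : a * rho x = α * rho x + γ * (rho x * 1) := by rw [ha]; ring
      rw [e]; exact this
    have := (((Real.continuous_exp.tendsto _).comp t3).mul_const (u x)).pow 2
    rw [mul_pow] at this
    exact this

lemma real_case {n : ℕ} {δ : ℝ} (hδ : 0 < δ)
    {V : EuclideanSpace ℝ (Fin n) → ℝ} (hV : ContDiff ℝ (⊤ : ℕ∞) V)
    (hdecay : ∀ k : ℕ, ∃ C : ℝ, ∀ x,
      ‖iteratedFDeriv ℝ k V x‖ ≤ C * (1 + ‖x‖) ^ (-(δ + (k:ℝ))))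
    {lam : ℝ} (hlam : 0 < lam)
    {u : EuclideanSpace ℝ (Fin n) → ℝ} (hu : ContDiff ℝ (⊤ : ℕ∞) u)
    (hL2 : Integrable (fun x => u x ^ 2))
    (heq : ∀ x, ∑ i, fderiv ℝ (fun y => fderiv ℝ u y (EuclideanSpace.single i 1)) x
      (EuclideanSpace.single i 1) = (V x - lam) * u x) :
    ∀ k : ℕ, Integrable (fun x => Real.exp ((k * Real.sqrt lam) * rho x) ^ 2 * u x ^ 2) := by
  obtain ⟨C0, hC0⟩ := hdecay 0
  obtain ⟨C1, hC1⟩ := hdecay 1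
  have hu1 : ContDiff ℝ (⊤ : ℕ∞) (fderiv ℝ u) := hu.fderiv_right (by simp)
  have hp : ∀ i : Fin n, ContDiff ℝ (⊤ : ℕ∞) (fun y => fderiv ℝ u y (EuclideanSpace.single i 1)) :=
    fun i => hu1.clm_apply contDiff_const
  have hone : (1 : WithTop ℕ∞) ≤ ((⊤ : ℕ∞) : WithTop ℕ∞) := by exact_mod_cast le_top
  have cV1 : ContDiff ℝ (⊤ : ℕ∞) (fderiv ℝ V) := hV.fderiv_right (by simp)
  have B0 : ∀ x, |V x| ≤ C0 * (1 + ‖x‖) ^ (-δ) := by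
    intro x
    have := hC0 x
    simpa using this
  have B1 : ∀ x, |∑ i, x i * fderiv ℝ V x (EuclideanSpace.single i 1)| ≤ C1 * (1 + ‖x‖) ^ (-δ) := by
    intro x
    have e0 : ∀ L : EuclideanSpace ℝ (Fin n) →L[ℝ] ℝ,
        ∑ i, x i * L (EuclideanSpace.single i 1) = L x := by
      intro L
      conv_rhs => rw [← (EuclideanSpace.basisFun (Fin n) ℝ).sum_repr x]
      simp
    have e := e0 (fderiv ℝ V x)
    have h1 := hC1 x
    rw [norm_iteratedFDeriv_one] at h1
    have hx : 0 < 1 + ‖x‖ := by positivity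
    rw [e, ← Real.norm_eq_abs]
    calc ‖fderiv ℝ V x x‖ ≤ ‖fderiv ℝ V x‖ * ‖x‖ := ContinuousLinearMap.le_opNorm _ _
      _ ≤ ‖fderiv ℝ V x‖ * (1 + ‖x‖) := by gcongr; linarith
      _ ≤ C1 * (1 + ‖x‖) ^ (-(δ + ((1:ℕ):ℝ))) * (1 + ‖x‖) := by gcongr
      _ = C1 * (1 + ‖x‖) ^ (-δ) := by
        rw [mul_assoc, ← Real.rpow_add_one hx.ne']
        congr 2; push_cast; ring
  have hC0' : 0 ≤ C0 := by
    have := (abs_nonneg _).trans (B0 0)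
    simpa using this
  have hC1' : 0 ≤ C1 := by
    have := (abs_nonneg _).trans (B1 0)
    simpa using this
  have B2 : ∀ x, |V x + (∑ i, x i * fderiv ℝ V x (EuclideanSpace.single i 1)) / 2|
      ≤ (C0 + C1) * (1 + ‖x‖) ^ (-δ) := by
    intro x
    obtain ⟨a1, a2⟩ := abs_le.1 (B0 x)
    obtain ⟨b1, b2⟩ := abs_le.1 (B1 x)
    have : 0 ≤ C1 * (1 + ‖x‖) ^ (-δ) := by positivity
    rw [abs_le]
    constructor <;> linarith
  have r1 : ∀ x : EuclideanSpace ℝ (Fin n), (1 + ‖x‖) ^ (-δ) ≤ 1 := fun x =>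
    Real.rpow_le_one_of_one_le_of_nonpos (by linarith [norm_nonneg x]) (by linarith)
  intro k
  induction k with
  | zero => simpa using hL2
  | succ k ih =>
    have := boot_step (lam := lam) (γ := Real.sqrt lam) (α := k * Real.sqrt lam) (CV := C0 + C1)
      (V := V) (V' := fun i x => fderiv ℝ V x (EuclideanSpace.single i 1)) (u := u)
      (p := fun i y => fderiv ℝ u y (EuclideanSpace.single i 1))
      (q := fun i j x => fderiv ℝ (fun y => fderiv ℝ u y (EuclideanSpace.single j 1)) x
        (EuclideanSpace.single i 1))
      hu.continuous (fun i => (hp i).continuous)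
      (fun i j => (((hp j).fderiv_right (m := (⊤ : ℕ∞)) (by simp)).clm_apply contDiff_const).continuous)
      hV.continuous (fun i => (cV1.clm_apply contDiff_const).continuous)
      (fun i => PD.of_contDiff (hu.of_le hone)) (fun i j => PD.of_contDiff ((hp j).of_le hone))
      (fun i j x => by
        have hd : DifferentiableAt ℝ (fderiv ℝ u) x := (hu1.differentiable (by simp)) x
        have hs : IsSymmSndFDerivAt ℝ u x := hu.contDiffAt.isSymmSndFDerivAt (by simp; exact WithTop.coe_le_coe.2 (le_top (a := (2:ℕ∞))))
        rw [fderiv_clm_apply hd (differentiableAt_const _), fderiv_clm_apply hd (differentiableAt_const _)]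
        simp
        exact hs _ _)
      (fun i => PD.of_contDiff (hV.of_le hone)) heq
      (fun x => by nlinarith [B0 x, r1 x])
      (fun x => by nlinarith [B2 x, r1 x])
      (fun η hη => by
        have t := (tendsto_rpow_neg_atTop hδ).const_mul (C0 + C1)
        rw [mul_zero] at t
        obtain ⟨R, hR⟩ := (t.eventually (gt_mem_nhds hη)).exists_forall_of_atTop
        exact ⟨R, fun x hx => (B2 x).trans (hR _ (hx.trans (rho_le x))).le⟩)
      (Real.sqrt_pos.2 hlam) (Real.sq_sqrt hlam.le) (by positivity) hL2 ih
    convert! this using 5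
    push_cast; ring

lemma comp_case {n : ℕ} {δ : ℝ} (hδ : 0 < δ)
    {V : EuclideanSpace ℝ (Fin n) → ℝ} (hV : ContDiff ℝ (⊤ : ℕ∞) V)
    (hdecay : ∀ k : ℕ, ∃ C : ℝ, ∀ x,
      ‖iteratedFDeriv ℝ k V x‖ ≤ C * (1 + ‖x‖) ^ (-(δ + (k:ℝ))))
    {lam : ℝ} (hlam : 0 < lam)
    {ψ : EuclideanSpace ℝ (Fin n) → ℂ} (hψ : ContDiff ℝ (⊤ : ℕ∞) ψ)
    (hL2 : Integrable (fun x => ‖ψ x‖ ^ 2))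
    (heq : ∀ x, -lap ψ x + (V x : ℂ) * ψ x = (lam : ℂ) * ψ x)
    (T : ℂ →L[ℝ] ℝ) (hT : ∀ z, |T z| ≤ ‖z‖) (k : ℕ) :
    Integrable (fun x => Real.exp ((k * Real.sqrt lam) * rho x) ^ 2 * T (ψ x) ^ 2) := by
  have hψ1 : ContDiff ℝ (⊤ : ℕ∞) (fderiv ℝ ψ) := hψ.fderiv_right (by simp)
  have hp : ∀ i : Fin n, ContDiff ℝ (⊤ : ℕ∞) (fun y => fderiv ℝ ψ y (EuclideanSpace.single i 1)) :=
    fun i => hψ1.clm_apply contDiff_const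
  have hTψ : ContDiff ℝ (⊤ : ℕ∞) (fun x => T (ψ x)) := T.contDiff.comp hψ
  refine real_case hδ hV hdecay hlam hTψ ?_ ?_ k
  · refine hL2.mono' (hTψ.continuous.pow 2).aestronglyMeasurable (Filter.Eventually.of_forall fun x => ?_)
    rw [Real.norm_eq_abs, abs_of_nonneg (sq_nonneg _), ← sq_abs]
    have := hT (ψ x)
    gcongr
  · intro x
    have comm : ∀ {g : EuclideanSpace ℝ (Fin n) → ℂ}, ContDiff ℝ (⊤ : ℕ∞) g → ∀ y v,
        fderiv ℝ (fun x => T (g x)) y v = T (fderiv ℝ g y v) := by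
      intro g hg y v
      have := (T.hasFDerivAt (x := g y)).comp y ((hg.differentiable (by simp)) y).hasFDerivAt
      have e := this.fderiv
      have e2 : (fun x => T (g x)) = T ∘ g := rfl
      rw [e2, e]; rfl
    simp_rw [comm hψ]
    have : ∀ i : Fin n, fderiv ℝ (fun y => T (fderiv ℝ ψ y (EuclideanSpace.single i 1))) x
        (EuclideanSpace.single i 1) = T (fderiv ℝ (fun y => fderiv ℝ ψ y (EuclideanSpace.single i 1)) x
        (EuclideanSpace.single i 1)) := fun i => comm (hp i) x _
    simp_rw [this]
    rw [← map_sum]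
    have e : lap ψ x = (V x - lam) • ψ x := by
      rw [Complex.real_smul]
      push_cast
      linear_combination -(heq x)
    have e2 := congrArg T e
    rw [map_smul, smul_eq_mul] at e2
    exact e2

/-- Euclidean instance of Theorem 5.2 / 5.10: superexponential decay of
positive-energy `L²` eigenfunctions of `-Δ + V`, `V` of symbolic decay order `-δ`. -/
theorem stmt_10 (n : ℕ) (hn : 1 ≤ n) (δ : ℝ) (hδ : 0 < δ)
    (V : EuclideanSpace ℝ (Fin n) → ℝ) (hV : ContDiff ℝ (⊤ : ℕ∞) V)
    (hdecay : ∀ k : ℕ, ∃ C : ℝ, ∀ x,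
      ‖iteratedFDeriv ℝ k V x‖ ≤ C * (1 + ‖x‖) ^ (-(δ + (k:ℝ))))
    (lam : ℝ) (hlam : 0 < lam)
    (ψ : EuclideanSpace ℝ (Fin n) → ℂ) (hψ : ContDiff ℝ (⊤ : ℕ∞) ψ)
    (hL2 : Integrable (fun x => ‖ψ x‖^2))
    (heq : ∀ x, -lap ψ x + (V x : ℂ) * ψ x = (lam : ℂ) * ψ x) :
    ∀ α : ℝ, Integrable (fun x => Real.exp (2*α*‖x‖) * ‖ψ x‖^2) := by
  intro α
  have hsl : 0 < Real.sqrt lam := Real.sqrt_pos.2 hlam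
  obtain ⟨k, hk⟩ := exists_nat_ge (α / Real.sqrt lam)
  rw [div_le_iff₀ hsl] at hk
  have h1 := comp_case hδ hV hdecay hlam hψ hL2 heq Complex.reCLM (fun z => Complex.abs_re_le_norm z) k
  have h2 := comp_case hδ hV hdecay hlam hψ hL2 heq Complex.imCLM (fun z => Complex.abs_im_le_norm z) k
  have cψ := hψ.continuous
  refine (h1.add h2).mono' (Continuous.aestronglyMeasurable (by fun_prop))
    (Filter.Eventually.of_forall fun x => ?_)
  rw [Real.norm_eq_abs, abs_of_nonneg (by positivity)]
  simp only [Pi.add_apply, Complex.reCLM_apply, Complex.imCLM_apply]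
  rw [← mul_add, ← Real.exp_nat_mul]
  have e : ‖ψ x‖ ^ 2 = (ψ x).re ^ 2 + (ψ x).im ^ 2 := by
    rw [← Complex.normSq_eq_norm_sq, Complex.normSq_apply]; ring
  rw [e]
  have h3 : α * ‖x‖ ≤ (k * Real.sqrt lam) * rho x :=
    mul_le_mul hk (norm_le_rho x) (norm_nonneg x) (by positivity)
  refine mul_le_mul_of_nonneg_right (Real.exp_le_exp.2 ?_) (by positivity)
  push_cast
  linarith
end
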